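/- Let $n \geq 2$, let $\alpha_1,\dots,\alpha_n$ be integers with $\alpha_j \geq 3$ for all $j$, set $\alpha_{\max} = \max\{\alpha_1,\dots,\alpha_n\}$, and let $m$ be an integer with $n < m \leq n\alpha_{\max}$. If $1 \leq p \leq \frac{2n\alpha_{\max}}{2n\alpha_{\max} - m}$, then there exists a constant $A_{\alpha,n,m} > 0$ such that for every Schwartz function $f$ on $\mathbb{R}^n$, $\left(\int_{\mathbb{S}^{n-1}} |T_{\alpha,m}f(x)|^2 \, d\sigma(x)\right)^{1/2} \leq A_{\alpha,n,m} \|f\|_{L^p(\mathbb{R}^n)}$. -/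

import Mathlib

open MeasureTheory Filter
open scoped ENNReal

/-- The oscillatory integral operator
`T_{α,m} f (x) = ∫ e^{i (x₁^{α₁} y₁^m + ⋯ + xₙ^{αₙ} yₙ^m)} f(y) dy`. -/
noncomputable def oscOp {n : ℕ} (α : Fin n → ℕ) (m : ℕ)
    (f : EuclideanSpace ℝ (Fin n) → ℂ) (x : EuclideanSpace ℝ (Fin n)) : ℂ :=
  ∫ y : EuclideanSpace ℝ (Fin n),
    Complex.exp (Complex.I * Complex.ofReal (∑ j, (x j) ^ (α j) * (y j) ^ m)) * f y

/-!
By the `T* T` identity, `∫ |T f|² dσ = ∬ f(y) conj(f(z)) K(y, z)`, where `K(y, z)` is the integral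
over the sphere of `exp(i ∑ ξₖ xₖ ^ αₖ)` with `ξₖ = yₖ ^ m - zₖ ^ m`.

Averaging over rotations in a coordinate plane containing the `i`-th axis reduces the decay of this
integral to phases `A cosᵃ + B sinᵇ` on the circle. At every point such a phase has a nonvanishing
derivative of some order between `1` and `max a b`, uniformly in the direction of `(A, B)`, so van
der Corput's lemma gives the decay `|ξᵢ| ^ (-δ)` for every `i` as long as `δ αₖ ≤ 1` for all `k`.
Taking the geometric mean over `i`, one gets `|K(y, z)| ≤ C (∏ⱼ |yⱼ ^ m - zⱼ ^ m| ^ (-1 / m)) ^ l`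
whenever `n l αₖ ≤ m` for all `k`.

The product kernel is homogeneous of degree `-1` in each pair `(yⱼ, zⱼ)`, so Schur's test with the
function `∏ⱼ |zⱼ| ^ (-1 / 2)` bounds it on `L²`. Hölder's inequality between this bound and the
trivial one on `L¹` yields the estimate on `L^p` with `l = 2 - 2 / p`.
-/

section VanDerCorput

variable {x y : ℝ}

section NormedSpace

variable {E : Type*} [NormedAddCommGroup E] [NormedSpace ℝ E] {f : ℝ → E} {M δ : ℝ}

/- Integrate by parts against the primitive of `f` that vanishes at `x`. -/
theorem norm_integral_smul_le_of_norm_primitive_le [CompleteSpace E] {ψ ψ' : ℝ → ℝ} (hxy : x ≤ y)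
    (hψ : ∀ t ∈ Set.Icc x y, HasDerivAt ψ (ψ' t) t) (hψ' : ContinuousOn ψ' (Set.Icc x y))
    (hf : Continuous f) (hM : ∀ u ∈ Set.Icc x y, ‖∫ t in x..u, f t‖ ≤ M) :
    ‖∫ t in x..y, ψ t • f t‖ ≤ M * (|ψ y| + ∫ t in x..y, |ψ' t|) := by
  rw [← Set.uIcc_of_le hxy] at hψ hψ'
  have hψ'_int : IntervalIntegrable ψ' volume x y := hψ'.intervalIntegrable
  have hparts := intervalIntegral.integral_smul_deriv_eq_deriv_smul hψ
    (fun t _ ↦ (hf.integral_hasStrictDerivAt x t).hasDerivAt) hψ'_int (hf.intervalIntegrable x y)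
  have hrest : ‖∫ t in x..y, ψ' t • ∫ s in x..t, f s‖ ≤ ∫ t in x..y, |ψ' t| * M := by
    refine intervalIntegral.norm_integral_le_of_norm_le hxy (.of_forall fun t ht ↦ ?_)
      (hψ'_int.abs.mul_const M)
    rw [norm_smul, Real.norm_eq_abs]
    gcongr
    exact hM t (Set.Ioc_subset_Icc_self ht)
  calc ‖∫ t in x..y, ψ t • f t‖
      ≤ |ψ y| * ‖∫ t in x..y, f t‖ + ‖∫ t in x..y, ψ' t • ∫ s in x..t, f s‖ := by
        rw [hparts, intervalIntegral.integral_same, smul_zero, sub_zero]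
        exact (norm_sub_le _ _).trans_eq (by rw [norm_smul, Real.norm_eq_abs])
    _ ≤ |ψ y| * M + ∫ t in x..y, |ψ' t| * M := by
        gcongr
        exact hM y (Set.right_mem_Icc.2 hxy)
    _ = M * (|ψ y| + ∫ t in x..y, |ψ' t|) := by
        rw [intervalIntegral.integral_mul_const]; ring

theorem norm_integral_le_sub_of_norm_le_one (hxy : x ≤ y) (hf : ∀ t, ‖f t‖ ≤ 1) :
    ‖∫ t in x..y, f t‖ ≤ y - x := by
  simpa [abs_of_nonneg (sub_nonneg.2 hxy)] using
    intervalIntegral.norm_integral_le_of_norm_le_const (a := x) (b := y) fun t _ ↦ hf t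

theorem norm_integral_le_two_mul_add_of_norm_integral_le_away (hδ : 0 ≤ δ) {c : ℝ}
    (hc : c ∈ Set.Icc x y) (hf : Continuous f) (hf1 : ∀ t, ‖f t‖ ≤ 1)
    (hM : ∀ u v, x ≤ u → u ≤ v → v ≤ y → (∀ t ∈ Set.Icc u v, δ ≤ |t - c|) →
      ‖∫ t in u..v, f t‖ ≤ M) (hM0 : 0 ≤ M) :
    ‖∫ t in x..y, f t‖ ≤ 2 * M + 2 * δ := by
  have hint : ∀ u v, IntervalIntegrable f volume u v := hf.intervalIntegrable
  have hleft : ‖∫ t in x..max x (c - δ), f t‖ ≤ M := by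
    rcases le_total x (c - δ) with h | h
    · rw [max_eq_right h]
      refine hM _ _ le_rfl h (by linarith [hc.2]) fun t ht ↦ ?_
      linarith [neg_le_abs (t - c), ht.2]
    · simpa [h] using hM0
  have hright : ‖∫ t in min y (c + δ)..y, f t‖ ≤ M := by
    rcases le_total (c + δ) y with h | h
    · rw [min_eq_right h]
      refine hM _ _ (by linarith [hc.1]) h le_rfl fun t ht ↦ ?_
      linarith [le_abs_self (t - c), ht.1]
    · simpa [h] using hM0
  have hmid : ‖∫ t in max x (c - δ)..min y (c + δ), f t‖ ≤ 2 * δ := by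
    refine (norm_integral_le_sub_of_norm_le_one ?_ hf1).trans ?_
    · exact (max_le hc.1 (by linarith)).trans (le_min hc.2 (by linarith))
    · linarith [le_max_right x (c - δ), min_le_right y (c + δ)]
  rw [← intervalIntegral.integral_add_adjacent_intervals (hint x (min y (c + δ))) (hint _ y),
    ← intervalIntegral.integral_add_adjacent_intervals (hint x (max x (c - δ))) (hint _ _)]
  linarith [norm_add₃_le (a := ∫ t in x..max x (c - δ), f t)
    (b := ∫ t in max x (c - δ)..min y (c + δ), f t) (c := ∫ t in min y (c + δ)..y, f t)]

theorem norm_integral_le_mul_of_norm_integral_le_short {η : ℝ} (hη : 0 ≤ η)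
    (hf : Continuous f) (N : ℕ) (hxy : x ≤ y) (hyN : y - x ≤ N * η)
    (hM : ∀ u v, x ≤ u → u ≤ v → v ≤ y → v - u ≤ η → ‖∫ t in u..v, f t‖ ≤ M) :
    ‖∫ t in x..y, f t‖ ≤ N * M := by
  induction N generalizing y with
  | zero =>
    obtain rfl : x = y := le_antisymm hxy (by simpa using hyN)
    simp
  | succ N ih =>
    have hz : max x (y - η) ≤ y := max_le hxy (by linarith)
    rw [← intervalIntegral.integral_add_adjacent_intervals (hf.intervalIntegrable x _)
      (hf.intervalIntegrable (max x (y - η)) y)]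
    have hlast : ‖∫ t in max x (y - η)..y, f t‖ ≤ M :=
      hM _ _ (le_max_left _ _) hz le_rfl (by linarith [le_max_right x (y - η)])
    have hinit : ‖∫ t in x..max x (y - η), f t‖ ≤ N * M := by
      refine ih (le_max_left _ _) ?_ fun u v hu huv hv ↦ hM u v hu huv (hv.trans hz)
      push_cast at hyN
      rw [sub_le_iff_le_add]
      exact max_le (le_add_of_nonneg_left (by positivity)) (by linarith)
    push_cast
    linarith [norm_add_le (∫ t in x..max x (y - η), f t) (∫ t in max x (y - η)..y, f t)]

end NormedSpace

section Oscillatory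

variable {φ : ℝ → ℝ} {lam : ℝ}

theorem hasDerivAt_iteratedDeriv {k : ℕ} (hφ : ContDiff ℝ (k + 1 : ℕ) φ) (t : ℝ) :
    HasDerivAt (iteratedDeriv k φ) (iteratedDeriv (k + 1) φ t) t := by
  rw [iteratedDeriv_succ]
  exact (hφ.differentiable_iteratedDeriv' k t).hasDerivAt

/- Write `e^{iφ}` as `1 / Dφ` times `Dφ e^{iφ}`, which has a bounded primitive. -/
theorem norm_integral_exp_le_of_le_abs_deriv (hxy : x ≤ y) (hlam : 0 < lam)
    (hφ : ContDiff ℝ 2 φ) (hφ' : ∀ t ∈ Set.Icc x y, lam ≤ |deriv φ t|) :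
    ‖∫ t in x..y, Complex.exp (Complex.I * φ t)‖ ≤
      2 * (lam⁻¹ + ∫ t in x..y, |-iteratedDeriv 2 φ t / deriv φ t ^ 2|) := by
  have hderiv : ∀ t, HasDerivAt φ (deriv φ t) t := fun t ↦
    (hφ.differentiable (by norm_num) t).hasDerivAt
  have hderiv2 : ∀ t, HasDerivAt (deriv φ) (iteratedDeriv 2 φ t) t := fun t ↦ by
    simpa using hasDerivAt_iteratedDeriv (k := 1) hφ t
  have hcont : Continuous (deriv φ) := hφ.continuous_deriv (by norm_num)
  have hne : ∀ t ∈ Set.Icc x y, deriv φ t ≠ 0 := fun t ht ↦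
    abs_pos.1 (hlam.trans_le (hφ' t ht))
  have hprim : ∀ u ∈ Set.Icc x y,
      ‖∫ t in x..u, Complex.exp (Complex.I * φ t) * (Complex.I * deriv φ t)‖ ≤ 2 := by
    intro u _
    rw [intervalIntegral.integral_eq_sub_of_hasDerivAt
      (fun t _ ↦ ((hderiv t).ofReal_comp.const_mul Complex.I).cexp)
      ((by fun_prop : Continuous _).intervalIntegrable _ _)]
    refine (norm_sub_le _ _).trans ?_
    simp only [Complex.norm_exp_I_mul_ofReal]
    norm_num
  have hamp := norm_integral_smul_le_of_norm_primitive_le hxy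
    (fun t ht ↦ (hderiv2 t).inv (hne t ht))
    (.div (hφ.continuous_iteratedDeriv' 2).neg.continuousOn (by fun_prop)
      fun t ht ↦ pow_ne_zero 2 (hne t ht)) (by fun_prop) hprim
  have hfactor : ∫ t in x..y, (deriv φ t)⁻¹ • (Complex.exp (Complex.I * φ t) *
      (Complex.I * deriv φ t)) = Complex.I * ∫ t in x..y, Complex.exp (Complex.I * φ t) := by
    rw [← intervalIntegral.integral_const_mul]
    refine intervalIntegral.integral_congr fun t ht ↦ ?_
    have : ((deriv φ t : ℝ) : ℂ) ≠ 0 := mod_cast hne t (Set.uIcc_of_le hxy ▸ ht)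
    simp only [Complex.real_smul, Complex.ofReal_inv]
    field_simp
  calc ‖∫ t in x..y, Complex.exp (Complex.I * φ t)‖
      ≤ 2 * (|(deriv φ y)⁻¹| + ∫ t in x..y, |-iteratedDeriv 2 φ t / deriv φ t ^ 2|) := by
        rw [← one_mul ‖_‖, ← Complex.norm_I, ← norm_mul, ← hfactor]
        exact hamp
    _ ≤ _ := by
        gcongr
        rw [abs_inv]
        exact inv_anti₀ hlam (hφ' y (Set.right_mem_Icc.2 hxy))

theorem norm_integral_exp_le_of_le_abs_deriv_of_iteratedDeriv_two_le {D : ℝ} (hxy : x ≤ y)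
    (hlam : 0 < lam) (hφ : ContDiff ℝ 2 φ) (hφ' : ∀ t ∈ Set.Icc x y, lam ≤ |deriv φ t|)
    (hφ'' : ∀ t ∈ Set.Icc x y, |iteratedDeriv 2 φ t| ≤ D) :
    ‖∫ t in x..y, Complex.exp (Complex.I * φ t)‖ ≤ 2 * (lam⁻¹ + D / lam ^ 2 * (y - x)) := by
  refine (norm_integral_exp_le_of_le_abs_deriv hxy hlam hφ hφ').trans ?_
  have hratio : ∀ t ∈ Set.uIoc x y, ‖|-iteratedDeriv 2 φ t / deriv φ t ^ 2|‖ ≤ D / lam ^ 2 := by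
    intro t ht
    have ht' : t ∈ Set.Icc x y := Set.Ioc_subset_Icc_self (Set.uIoc_of_le hxy ▸ ht)
    rw [Real.norm_eq_abs, abs_abs, abs_div, abs_neg, abs_pow]
    exact div_le_div₀ ((abs_nonneg _).trans (hφ'' t ht')) (hφ'' t ht') (by positivity)
      (pow_le_pow_left₀ hlam.le (hφ' t ht') 2)
  gcongr
  calc _ ≤ _ := le_abs_self _
    _ ≤ _ := intervalIntegral.norm_integral_le_of_norm_le_const hratio
    _ = _ := by rw [abs_of_nonneg (sub_nonneg.2 hxy)]

theorem integral_abs_eq_abs_integral_of_ne_zero {g : ℝ → ℝ} (hxy : x ≤ y)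
    (hg : ContinuousOn g (Set.Icc x y)) (hg0 : ∀ t ∈ Set.Icc x y, g t ≠ 0) :
    ∫ t in x..y, |g t| = |∫ t in x..y, g t| := by
  have hIcc := Set.uIcc_of_le hxy
  rcases isPreconnected_Icc.mapsTo_Ioi_or_Iio hg hg0 with hpos | hneg
  · rw [abs_of_nonneg (intervalIntegral.integral_nonneg hxy fun t ht ↦ (hpos ht).le)]
    exact intervalIntegral.integral_congr fun t ht ↦ abs_of_pos (hpos (hIcc ▸ ht))
  · rw [← abs_neg, ← intervalIntegral.integral_neg, abs_of_nonneg
      (intervalIntegral.integral_nonneg hxy fun t ht ↦ neg_nonneg.2 (hneg ht).le)]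
    exact intervalIntegral.integral_congr fun t ht ↦ abs_of_neg (hneg (hIcc ▸ ht))

theorem norm_integral_exp_le_of_le_abs_deriv_of_iteratedDeriv_two_ne_zero (hxy : x ≤ y)
    (hlam : 0 < lam) (hφ : ContDiff ℝ 2 φ) (hφ' : ∀ t ∈ Set.Icc x y, lam ≤ |deriv φ t|)
    (hφ'' : ∀ t ∈ Set.Icc x y, iteratedDeriv 2 φ t ≠ 0) :
    ‖∫ t in x..y, Complex.exp (Complex.I * φ t)‖ ≤ 6 * lam⁻¹ := by
  have hne : ∀ t ∈ Set.Icc x y, deriv φ t ≠ 0 := fun t ht ↦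
    abs_pos.1 (hlam.trans_le (hφ' t ht))
  have hcont : Continuous (deriv φ) := hφ.continuous_deriv (by norm_num)
  have hratio_cont : ContinuousOn (fun t ↦ -iteratedDeriv 2 φ t / deriv φ t ^ 2) (Set.Icc x y) :=
    .div (hφ.continuous_iteratedDeriv' 2).neg.continuousOn (by fun_prop)
      fun t ht ↦ pow_ne_zero 2 (hne t ht)
  have hratio_ne : ∀ t ∈ Set.Icc x y, -iteratedDeriv 2 φ t / deriv φ t ^ 2 ≠ 0 := fun t ht ↦
    div_ne_zero (neg_ne_zero.2 (hφ'' t ht)) (pow_ne_zero 2 (hne t ht))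
  have hinv_deriv : ∀ t ∈ Set.uIcc x y,
      HasDerivAt (deriv φ)⁻¹ (-iteratedDeriv 2 φ t / deriv φ t ^ 2) t := fun t ht ↦ by
    simpa using (hasDerivAt_iteratedDeriv (k := 1) hφ t).inv
      (by simpa using hne t (Set.uIcc_of_le hxy ▸ ht))
  have hinv_le : ∀ t ∈ Set.Icc x y, |(deriv φ t)⁻¹| ≤ lam⁻¹ := fun t ht ↦ by
    rw [abs_inv]
    exact inv_anti₀ hlam (hφ' t ht)
  have hvariation : ∫ t in x..y, |-iteratedDeriv 2 φ t / deriv φ t ^ 2| ≤ lam⁻¹ + lam⁻¹ := by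
    rw [integral_abs_eq_abs_integral_of_ne_zero hxy hratio_cont hratio_ne,
      intervalIntegral.integral_eq_sub_of_hasDerivAt hinv_deriv
        (ContinuousOn.intervalIntegrable (by rwa [Set.uIcc_of_le hxy]))]
    exact (abs_sub _ _).trans (add_le_add (hinv_le y (Set.right_mem_Icc.2 hxy))
      (hinv_le x (Set.left_mem_Icc.2 hxy)))
  linarith [norm_integral_exp_le_of_le_abs_deriv hxy hlam hφ hφ']

/- Take `c` minimising `|h|`: if `h c ≠ 0` then `h` has constant sign on the interval. -/
theorem exists_forall_mul_abs_sub_le_abs {h h' : ℝ → ℝ} {κ : ℝ} (hxy : x ≤ y)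
    (hh : ∀ t, HasDerivAt h (h' t) t) (hκ : ∀ t ∈ Set.Icc x y, κ ≤ |h' t|) :
    ∃ c ∈ Set.Icc x y, ∀ t ∈ Set.Icc x y, κ * |t - c| ≤ |h t| := by
  have hcont : Continuous h := continuous_iff_continuousAt.2 fun t ↦ (hh t).continuousAt
  obtain ⟨c, hc, hmin⟩ := isCompact_Icc.exists_isMinOn (Set.nonempty_Icc.2 hxy)
    hcont.abs.continuousOn
  have hslope : ∀ s ∈ Set.Icc x y, ∀ t ∈ Set.Icc x y, s < t → κ * |t - s| ≤ |h t - h s| := by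
    intro s hs t ht hst
    obtain ⟨z, hz, hz'⟩ := exists_hasDerivAt_eq_slope h h' hst hcont.continuousOn fun z _ ↦ hh z
    rw [← div_mul_cancel₀ (h t - h s) (sub_pos.2 hst).ne', ← hz', abs_mul]
    gcongr
    exact hκ z ⟨hs.1.trans hz.1.le, hz.2.le.trans ht.2⟩
  have hcloser : ∀ t ∈ Set.Icc x y, |h t - h c| ≤ |h t| := by
    intro t ht
    have hct : |h c| ≤ |h t| := hmin ht
    have hsign : 0 ≤ h c * h t := by
      by_contra! hlt
      obtain ⟨s, hs, hs0⟩ : (0 : ℝ) ∈ h '' Set.uIcc c t := by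
        refine intermediate_value_uIcc hcont.continuousOn (Set.mem_uIcc.2 ?_)
        grind [mul_neg_iff]
      have hc0 : |h c| ≤ |h s| := hmin (Set.uIcc_subset_Icc hc ht hs)
      rw [hs0, abs_zero, abs_nonpos_iff] at hc0
      simp [hc0] at hlt
    rw [← sq_le_sq]
    nlinarith [mul_le_mul_of_nonneg_left hct (abs_nonneg (h c)), abs_mul_abs_self (h c),
      abs_mul (h c) (h t), abs_of_nonneg hsign]
  refine ⟨c, hc, fun t ht ↦ le_trans ?_ (hcloser t ht)⟩
  rcases lt_trichotomy t c with htc | rfl | hct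
  · rw [abs_sub_comm t, abs_sub_comm (h t)]
    exact hslope t ht c hc htc
  · simp
  · exact hslope c hc t ht hct

theorem norm_integral_exp_le_of_le_abs_iteratedDeriv_succ {k : ℕ} {δ M : ℝ} (hxy : x ≤ y)
    (hlam : 0 ≤ lam) (hδ : 0 ≤ δ) (hM0 : 0 ≤ M) (hφ : ContDiff ℝ (k + 1 : ℕ) φ)
    (hφk : ∀ t ∈ Set.Icc x y, lam ≤ |iteratedDeriv (k + 1) φ t|)
    (hM : ∀ u v, x ≤ u → u ≤ v → v ≤ y → (∀ t ∈ Set.Icc u v, lam * δ ≤ |iteratedDeriv k φ t|) →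
      ‖∫ t in u..v, Complex.exp (Complex.I * φ t)‖ ≤ M) :
    ‖∫ t in x..y, Complex.exp (Complex.I * φ t)‖ ≤ 2 * M + 2 * δ := by
  obtain ⟨c, hc, hfar⟩ := exists_forall_mul_abs_sub_le_abs hxy (hasDerivAt_iteratedDeriv hφ) hφk
  have hcont : Continuous φ := hφ.continuous
  refine norm_integral_le_two_mul_add_of_norm_integral_le_away hδ hc (by fun_prop)
    (fun t ↦ (Complex.norm_exp_I_mul_ofReal _).le) (fun u v hxu huv hvy huvc ↦ ?_) hM0
  exact hM u v hxu huv hvy fun t ht ↦ (mul_le_mul_of_nonneg_left (huvc t ht) hlam).trans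
    (hfar t ⟨hxu.trans ht.1, ht.2.trans hvy⟩)

theorem mul_rpow_neg_inv_rpow_neg_inv {s : ℝ} (hlam : 0 < lam) (hs : 0 < s) :
    (lam * lam ^ (-(s + 1)⁻¹)) ^ (-s⁻¹) = lam ^ (-(s + 1)⁻¹) := by
  nth_rewrite 1 [← Real.rpow_one lam]
  rw [← Real.rpow_add hlam, ← Real.rpow_mul hlam.le]
  congr 1
  field_simp
  ring

/- The constant comes from the recursion `c₂ = 14`, `c_{k+1} = 2 c_k + 2`. -/
theorem norm_integral_exp_le_of_le_abs_iteratedDeriv (k : ℕ) (hxy : x ≤ y) (hlam : 0 < lam)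
    (hφ : ContDiff ℝ (k + 2 : ℕ) φ)
    (hφk : ∀ t ∈ Set.Icc x y, lam ≤ |iteratedDeriv (k + 2) φ t|) :
    ‖∫ t in x..y, Complex.exp (Complex.I * φ t)‖ ≤
      (2 ^ (k + 4) - 2) * lam ^ (-((k : ℝ) + 2)⁻¹) := by
  induction k generalizing x y lam with
  | zero =>
    have hδ : 0 < lam ^ (-((1 : ℝ) + 1)⁻¹) := Real.rpow_pos_of_pos hlam _
    have hsplit := norm_integral_exp_le_of_le_abs_iteratedDeriv_succ hxy hlam.le hδ.le
      (by positivity : 0 ≤ 6 * (lam * lam ^ (-((1 : ℝ) + 1)⁻¹)) ^ (-(1 : ℝ)⁻¹)) hφ hφk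
      fun u v hxu huv hvy hlarge ↦ by
        rw [inv_one, Real.rpow_neg_one]
        refine norm_integral_exp_le_of_le_abs_deriv_of_iteratedDeriv_two_ne_zero huv
          (by positivity) hφ (fun t ht ↦ by simpa using hlarge t ht) fun t ht ↦ ?_
        exact abs_pos.1 (hlam.trans_le (hφk t ⟨hxu.trans ht.1, ht.2.trans hvy⟩))
    rw [mul_rpow_neg_inv_rpow_neg_inv hlam one_pos] at hsplit
    refine hsplit.trans_eq ?_
    norm_num
    ring
  | succ k ih =>
    have hδ : 0 < lam ^ (-((k : ℝ) + 2 + 1)⁻¹) := Real.rpow_pos_of_pos hlam _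
    have hconst : (0 : ℝ) ≤ 2 ^ (k + 4) - 2 := by
      linarith [pow_le_pow_right₀ (one_le_two : (1 : ℝ) ≤ 2) (by lia : 1 ≤ k + 4)]
    have hsplit := norm_integral_exp_le_of_le_abs_iteratedDeriv_succ hxy hlam.le hδ.le
      (by positivity : 0 ≤ (2 ^ (k + 4) - 2) *
        (lam * lam ^ (-((k : ℝ) + 2 + 1)⁻¹)) ^ (-((k : ℝ) + 2)⁻¹)) hφ hφk
      fun u v _ huv _ hlarge ↦ ih huv (by positivity) (hφ.of_le (mod_cast Nat.le_succ _)) hlarge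
    rw [mul_rpow_neg_inv_rpow_neg_inv hlam (by positivity)] at hsplit
    refine hsplit.trans_eq ?_
    push_cast
    ring_nf

end Oscillatory

end VanDerCorput

section FiniteType

theorem exists_pos_forall_exists_le_abs {X ι : Type*} [TopologicalSpace X] {S : Set X}
    (hS : IsCompact S) {J : Finset ι} {g : ι → X → ℝ} (hg : ∀ k ∈ J, ContinuousOn (g k) S)
    (hne : ∀ q ∈ S, ∃ k ∈ J, g k q ≠ 0) : ∃ c > 0, ∀ q ∈ S, ∃ k ∈ J, c ≤ |g k q| := by
  have hsum : ContinuousOn (fun q ↦ ∑ k ∈ J, |g k q|) S :=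
    continuousOn_finsetSum J fun k hk ↦ (hg k hk).abs
  obtain ⟨c, hc, hle⟩ := hS.exists_forall_le' (a := 0) hsum fun q hq ↦ by
    obtain ⟨k, hk, hkq⟩ := hne q hq
    exact Finset.sum_pos' (fun _ _ ↦ abs_nonneg _) ⟨k, hk, abs_pos.2 hkq⟩
  refine ⟨c / (J.card + 1), by positivity, fun q hq ↦ ?_⟩
  by_contra! hsmall
  have hcard : ∑ k ∈ J, |g k q| ≤ J.card * (c / (J.card + 1)) := by
    simpa using Finset.sum_le_card_nsmul J _ _ fun k hk ↦ (hsmall k hk).le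
  have : J.card * (c / (J.card + 1)) < c := by
    rw [← mul_div_assoc, div_lt_iff₀ (by positivity)]
    linarith
  linarith [hle q hq]

theorem exists_forall_abs_le {X ι : Type*} [TopologicalSpace X] {S : Set X} (hS : IsCompact S)
    {J : Finset ι} {g : ι → X → ℝ} (hg : ∀ k ∈ J, ContinuousOn (g k) S) :
    ∃ D, ∀ k ∈ J, ∀ q ∈ S, |g k q| ≤ D := by
  obtain ⟨D, hD⟩ := hS.exists_bound_of_continuousOn
    (continuousOn_finsetSum J fun k hk ↦ (hg k hk).abs)
  refine ⟨D, fun k hk q hq ↦ ?_⟩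
  exact (Finset.single_le_sum (f := fun k ↦ |g k q|) (fun _ _ ↦ abs_nonneg _) hk).trans
    ((le_abs_self _).trans (hD q hq))

variable {x y c D lam : ℝ} {N k : ℕ}

theorem norm_integral_exp_le_of_le_abs_iteratedDeriv_of_short {φ : ℝ → ℝ} (hxy : x ≤ y)
    (hk : 1 ≤ k) (hc : 0 < c) (hφ : ContDiff ℝ (k + 1 : ℕ) φ)
    (hφk : ∀ t ∈ Set.Icc x y, c ≤ |iteratedDeriv k φ t|)
    (hD : ∀ t ∈ Set.Icc x y, |iteratedDeriv 2 φ t| ≤ D) (hshort : D * (y - x) ≤ c) :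
    ‖∫ t in x..y, Complex.exp (Complex.I * φ t)‖ ≤ 2 ^ (k + 2) * c ^ (-(k : ℝ)⁻¹) := by
  rcases hk.eq_or_lt with rfl | hk2
  · calc _ ≤ 2 * (c⁻¹ + D / c ^ 2 * (y - x)) :=
          norm_integral_exp_le_of_le_abs_deriv_of_iteratedDeriv_two_le hxy hc hφ
            (by simpa using hφk) hD
      _ ≤ 2 * (c⁻¹ + c⁻¹) := by
          gcongr
          rw [div_mul_eq_mul_div, div_le_iff₀ (by positivity)]
          exact hshort.trans_eq (by field_simp)
      _ ≤ _ := by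
          rw [Nat.cast_one, inv_one, Real.rpow_neg_one]
          linarith [inv_pos.2 hc]
  · obtain ⟨j, rfl⟩ := Nat.exists_eq_add_of_le' hk2
    calc _ ≤ _ := norm_integral_exp_le_of_le_abs_iteratedDeriv j hxy hc
          (hφ.of_le (mod_cast Nat.le_succ _)) hφk
      _ ≤ 2 ^ (j + 4) * c ^ (-((j : ℝ) + 2)⁻¹) := by
          gcongr
          linarith
      _ = _ := by push_cast; rfl

theorem norm_integral_exp_const_mul_le_of_le_abs_iteratedDeriv {φ : ℝ → ℝ} (hxy : x ≤ y)
    (hk : k ∈ Finset.Icc 1 N) (hφ : ContDiff ℝ (N + 1 : ℕ) φ) (hc : 0 < c) (hc1 : c ≤ 1)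
    (hlam : 1 ≤ lam) (hφk : ∀ t ∈ Set.Icc x y, c ≤ |iteratedDeriv k φ t|)
    (hD : ∀ t ∈ Set.Icc x y, |iteratedDeriv 2 φ t| ≤ D) (hshort : D * (y - x) ≤ c) :
    ‖∫ t in x..y, Complex.exp (Complex.I * (lam * φ t : ℝ))‖ ≤
      2 ^ (N + 2) * c⁻¹ * lam ^ (-(N : ℝ)⁻¹) := by
  have hlam0 : 0 < lam := by linarith
  obtain ⟨hk1, hkN⟩ := Finset.mem_Icc.1 hk
  have hk0 : (1 : ℝ) ≤ k := mod_cast hk1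
  have hscale : ∀ j t, |iteratedDeriv j (fun t ↦ lam * φ t) t| = lam * |iteratedDeriv j φ t| :=
    fun j t ↦ by rw [iteratedDeriv_const_mul_field, abs_mul, abs_of_pos hlam0]
  calc _ ≤ 2 ^ (k + 2) * (lam * c) ^ (-(k : ℝ)⁻¹) :=
        norm_integral_exp_le_of_le_abs_iteratedDeriv_of_short (D := lam * D) hxy hk1
          (by positivity) (contDiff_const.mul (hφ.of_le (mod_cast by lia)))
          (fun t ht ↦ by rw [hscale]; gcongr; exact hφk t ht)
          (fun t ht ↦ by rw [hscale]; gcongr; exact hD t ht)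
          (by rw [mul_assoc]; gcongr)
    _ = 2 ^ (k + 2) * (lam ^ (-(k : ℝ)⁻¹) * c ^ (-(k : ℝ)⁻¹)) := by
        rw [Real.mul_rpow hlam0.le hc.le]
    _ ≤ 2 ^ (N + 2) * (lam ^ (-(N : ℝ)⁻¹) * c ^ (-1 : ℝ)) := by
        refine mul_le_mul (pow_le_pow_right₀ one_le_two (by lia)) (mul_le_mul ?_ ?_ ?_ ?_) ?_ ?_
        · exact Real.rpow_le_rpow_of_exponent_le hlam (by gcongr)
        · exact Real.rpow_le_rpow_of_exponent_ge hc hc1 (neg_le_neg (inv_le_one_of_one_le₀ hk0))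
        all_goals positivity
    _ = _ := by rw [Real.rpow_neg_one]; ring

theorem le_abs_iteratedDeriv_of_short {φ : ℝ → ℝ} (hφ : ContDiff ℝ (k + 1 : ℕ) φ)
    (hx : 2 * c ≤ |iteratedDeriv k φ x|) (hshort : D * (y - x) ≤ c)
    (hD : ∀ t ∈ Set.Icc x y, |iteratedDeriv (k + 1) φ t| ≤ D) :
    ∀ t ∈ Set.Icc x y, c ≤ |iteratedDeriv k φ t| := by
  intro t ht
  have hxt : x ∈ Set.Icc x y := Set.left_mem_Icc.2 (ht.1.trans ht.2)
  have hlip : |iteratedDeriv k φ t - iteratedDeriv k φ x| ≤ D * |t - x| :=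
    (convex_Icc x y).norm_image_sub_le_of_norm_hasDerivWithin_le
      (fun s _ ↦ (hasDerivAt_iteratedDeriv hφ s).hasDerivWithinAt) hD hxt ht
  have : D * |t - x| ≤ c := by
    rw [abs_of_nonneg (sub_nonneg.2 ht.1)]
    refine le_trans ?_ hshort
    gcongr
    · exact (abs_nonneg _).trans (hD x hxt)
    · exact ht.2
  linarith [abs_sub_abs_le_abs_sub (iteratedDeriv k φ x) (iteratedDeriv k φ t),
    abs_sub_comm (iteratedDeriv k φ x) (iteratedDeriv k φ t)]

theorem exists_norm_integral_exp_const_mul_le_of_isCompact {P : Type*} [TopologicalSpace P]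
    {K : Set P} (hK : IsCompact K) {φ : P → ℝ → ℝ} (hφ : ∀ p ∈ K, ContDiff ℝ (N + 1 : ℕ) (φ p))
    (hcont : ∀ k ∈ Finset.range (N + 2),
      ContinuousOn (fun q : P × ℝ ↦ iteratedDeriv k (φ q.1) q.2) (K ×ˢ Set.Icc x y))
    (htype : ∀ p ∈ K, ∀ t ∈ Set.Icc x y, ∃ k ∈ Finset.Icc 1 N, iteratedDeriv k (φ p) t ≠ 0) :
    ∃ C, ∀ p ∈ K, ∀ lam, 1 ≤ lam → ∀ u ∈ Set.Icc x y,
      ‖∫ t in x..u, Complex.exp (Complex.I * (lam * φ p t : ℝ))‖ ≤ C * lam ^ (-(N : ℝ)⁻¹) := by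
  have hS : IsCompact (K ×ˢ Set.Icc x y) := hK.prod isCompact_Icc
  obtain ⟨c₀, hc₀, hlow⟩ := exists_pos_forall_exists_le_abs hS
    (fun k hk ↦ hcont k (by simp only [Finset.mem_Icc, Finset.mem_range] at hk ⊢; lia))
    fun q hq ↦ htype q.1 hq.1 q.2 hq.2
  obtain ⟨D₀, hD₀⟩ := exists_forall_abs_le hS hcont
  set c := min (c₀ / 2) 1
  set D := max D₀ 1
  have hc : 0 < c := by positivity
  have hD : 0 < D := by positivity
  refine ⟨⌈(y - x) / (c / D)⌉₊ * (2 ^ (N + 2) * c⁻¹), fun p hp lam hlam u hu ↦ ?_⟩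
  have hbound : ∀ k ∈ Finset.range (N + 2), ∀ t ∈ Set.Icc x y, |iteratedDeriv k (φ p) t| ≤ D :=
    fun k hk t ht ↦ (hD₀ k hk (p, t) ⟨hp, ht⟩).trans (le_max_left _ _)
  rw [mul_assoc]
  refine norm_integral_le_mul_of_norm_integral_le_short (by positivity : 0 ≤ c / D)
    ?_ _ hu.1 ?_ fun v w hv hvw hw hshort ↦ ?_
  · have := (hφ p hp).continuous
    fun_prop
  · rw [← div_le_iff₀ (by positivity)]
    exact (div_le_div_of_nonneg_right (by linarith [hu.2]) (by positivity)).trans (Nat.le_ceil _)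
  have hsub : Set.Icc v w ⊆ Set.Icc x y := Set.Icc_subset_Icc hv (hw.trans hu.2)
  obtain ⟨k, hk, hkv⟩ := hlow (p, v) ⟨hp, hsub (Set.left_mem_Icc.2 hvw)⟩
  obtain ⟨hk1, hkN⟩ := Finset.mem_Icc.1 hk
  have hDc : D * (w - v) ≤ c := by rwa [mul_comm, ← le_div_iff₀ hD]
  refine norm_integral_exp_const_mul_le_of_le_abs_iteratedDeriv hvw hk (hφ p hp) hc
    (min_le_right _ _) hlam (le_abs_iteratedDeriv_of_short ((hφ p hp).of_le (mod_cast by lia))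
      (le_trans (by linarith [min_le_left (c₀ / 2) 1]) hkv) hDc fun t ht ↦
        hbound _ (Finset.mem_range.2 (by lia)) t (hsub ht))
    (fun t ht ↦ hbound 2 (Finset.mem_range.2 (by lia)) t (hsub ht)) hDc

end FiniteType

section CirclePhase

/-- The restriction of `A x₁ᵃ + B x₂ᵇ` to the unit circle in angular coordinates, where
`p = (A, B)`; the coefficients are bundled so that they range over a compact unit sphere. -/
noncomputable def circlePhase (a b : ℕ) (p : ℝ × ℝ) (t : ℝ) : ℝ :=
  p.1 * Real.cos t ^ a + p.2 * Real.sin t ^ b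

variable {a b : ℕ} {p : ℝ × ℝ} {t : ℝ}

theorem contDiff_circlePhase {r : WithTop ℕ∞} : ContDiff ℝ r (circlePhase a b p) := by
  unfold circlePhase
  fun_prop

theorem circlePhase_smul (lam : ℝ) : circlePhase a b (lam • p) t = lam * circlePhase a b p t := by
  simp only [circlePhase, Prod.smul_fst, Prod.smul_snd, smul_eq_mul]
  ring

theorem iteratedDeriv_circlePhase (k : ℕ) :
    iteratedDeriv k (circlePhase a b p) t =
      p.1 * iteratedDeriv k (fun s ↦ Real.cos s ^ a) t +
        p.2 * iteratedDeriv k (fun s ↦ Real.sin s ^ b) t := by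
  unfold circlePhase
  rw [iteratedDeriv_fun_add (by fun_prop) (by fun_prop), iteratedDeriv_const_mul_field,
    iteratedDeriv_const_mul_field]

theorem continuous_iteratedDeriv_circlePhase (k : ℕ) :
    Continuous fun q : (ℝ × ℝ) × ℝ ↦ iteratedDeriv k (circlePhase a b q.1) q.2 := by
  simp only [iteratedDeriv_circlePhase]
  have hcos : Continuous (iteratedDeriv k fun s ↦ Real.cos s ^ a) :=
    ContDiff.continuous_iteratedDeriv' k (by fun_prop)
  have hsin : Continuous (iteratedDeriv k fun s ↦ Real.sin s ^ b) :=
    ContDiff.continuous_iteratedDeriv' k (by fun_prop)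
  exact (continuous_fst.fst.mul (hcos.comp continuous_snd)).add
    (continuous_fst.snd.mul (hsin.comp continuous_snd))

theorem deriv_circlePhase_add_two : deriv (circlePhase (a + 2) (b + 2) p) t =
    Real.sin t * Real.cos t *
      ((b + 2) * p.2 * Real.sin t ^ b - (a + 2) * p.1 * Real.cos t ^ a) := by
  have hder := (((Real.hasDerivAt_cos t).pow (a + 2)).const_mul p.1).add
    (((Real.hasDerivAt_sin t).pow (b + 2)).const_mul p.2)
  refine HasDerivAt.deriv (hder.congr_deriv ?_)
  push_cast
  ring

theorem iteratedDeriv_two_circlePhase_add_two :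
    iteratedDeriv 2 (circlePhase (a + 2) (b + 2) p) t =
      (b + 2) * p.2 * Real.sin t ^ b * ((b + 1) * Real.cos t ^ 2 - Real.sin t ^ 2) +
        (a + 2) * p.1 * Real.cos t ^ a * ((a + 1) * Real.sin t ^ 2 - Real.cos t ^ 2) := by
  rw [iteratedDeriv_succ, iteratedDeriv_one, funext fun s ↦
    deriv_circlePhase_add_two (a := a) (b := b) (p := p) (t := s)]
  have hsin := Real.hasDerivAt_sin t
  have hcos := Real.hasDerivAt_cos t
  have hder := (hsin.mul hcos).mul (((hsin.pow b).const_mul ((b + 2) * p.2)).sub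
    ((hcos.pow a).const_mul ((a + 2) * p.1)))
  refine HasDerivAt.deriv (hder.congr_deriv ?_)
  rcases a with _ | a <;> rcases b with _ | b <;> simp <;> ring

theorem iteratedDeriv_pow_ne_zero_of_deriv_ne_zero {f : ℝ → ℝ} (hf : AnalyticAt ℝ f t)
    (hft : f t = 0) (hf' : deriv f t ≠ 0) (k : ℕ) : iteratedDeriv k (f ^ k) t ≠ 0 := by
  refine ((analyticOrderAt_eq_nat_iff_iteratedDeriv_eq_zero (hf.pow k)).1 ?_).2
  rw [analyticOrderAt_pow hf, hf.analyticOrderAt_eq_one_of_zero_deriv_ne_zero hft hf']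
  simp

theorem iteratedDeriv_circlePhase_ne_zero_of_sin_eq_zero (ht : Real.sin t = 0) (hp1 : p.1 = 0)
    (hp2 : p.2 ≠ 0) : iteratedDeriv b (circlePhase a b p) t ≠ 0 := by
  rw [iteratedDeriv_circlePhase, hp1, zero_mul, zero_add]
  refine mul_ne_zero hp2 (iteratedDeriv_pow_ne_zero_of_deriv_ne_zero Real.analyticAt_sin ht ?_ b)
  intro hcos
  simpa [ht, show Real.cos t = 0 by simpa using hcos] using Real.sin_sq_add_cos_sq t

theorem iteratedDeriv_circlePhase_ne_zero_of_cos_eq_zero (ht : Real.cos t = 0) (hp1 : p.1 ≠ 0)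
    (hp2 : p.2 = 0) : iteratedDeriv a (circlePhase a b p) t ≠ 0 := by
  rw [iteratedDeriv_circlePhase, hp2, zero_mul, add_zero]
  refine mul_ne_zero hp1 (iteratedDeriv_pow_ne_zero_of_deriv_ne_zero Real.analyticAt_cos ht ?_ a)
  intro hsin
  simpa [ht, show Real.sin t = 0 by simpa using hsin] using Real.sin_sq_add_cos_sq t

/- With `U = b B sin^{b-2}` and `V = a A cos^{a-2}` the first derivative is `sin cos (U - V)`, and
where `U = V` the second one is `U ((b - 2) cos² + (a - 2) sin²)`. -/
theorem eq_zero_of_deriv_circlePhase_eq_zero (ha : 0 < a) (hb : 0 < b) (hsin : Real.sin t ≠ 0)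
    (hcos : Real.cos t ≠ 0) (hfirst : deriv (circlePhase (a + 2) (b + 2) p) t = 0)
    (hsecond : iteratedDeriv 2 (circlePhase (a + 2) (b + 2) p) t = 0) : p = 0 := by
  rw [deriv_circlePhase_add_two] at hfirst
  rw [iteratedDeriv_two_circlePhase_add_two] at hsecond
  have ha0 : (a : ℝ) + 2 ≠ 0 := by positivity
  have hb0 : (b : ℝ) + 2 ≠ 0 := by positivity
  set U := ((b : ℝ) + 2) * p.2 * Real.sin t ^ b with hU
  set V := ((a : ℝ) + 2) * p.1 * Real.cos t ^ a with hV
  have hUV : U = V := by simpa [hsin, hcos, sub_eq_zero] using hfirst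
  have hpos : 0 < b * Real.cos t ^ 2 + a * Real.sin t ^ 2 := by positivity
  have hU0 : U = 0 := by
    refine (mul_eq_zero.1 ?_).resolve_right hpos.ne'
    rw [← hUV] at hsecond
    linarith
  have hp1 : p.1 = 0 := by simpa [hcos, ha0, hV] using hUV.symm.trans hU0
  have hp2 : p.2 = 0 := by simpa [hsin, hb0, hU] using hU0
  exact Prod.ext hp1 hp2

theorem exists_iteratedDeriv_circlePhase_ne_zero (ha : 3 ≤ a) (hb : 3 ≤ b) (hp : p ≠ 0) (t : ℝ) :
    ∃ k ∈ Finset.Icc 1 (max a b), iteratedDeriv k (circlePhase a b p) t ≠ 0 := by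
  by_contra! hzero
  obtain ⟨a, rfl⟩ := Nat.exists_eq_add_of_le' ha
  obtain ⟨b, rfl⟩ := Nat.exists_eq_add_of_le' hb
  have hfirst := hzero 1 (by simp)
  rw [iteratedDeriv_one] at hfirst
  have hsecond := hzero 2 (by simp)
  have hsecond' := hsecond
  rw [iteratedDeriv_two_circlePhase_add_two (a := a + 1) (b := b + 1)] at hsecond'
  push_cast at hsecond'
  have ha0 : (a : ℝ) + 1 + 2 ≠ 0 := by positivity
  have hb0 : (b : ℝ) + 1 + 2 ≠ 0 := by positivity
  rcases eq_or_ne (Real.sin t) 0 with hsin | hsin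
  · have hp1 : p.1 = 0 := by
      have hcos : Real.cos t ≠ 0 := fun h ↦ by simpa [h, hsin] using Real.sin_sq_add_cos_sq t
      simpa [hsin, hcos, ha0] using hsecond'
    exact iteratedDeriv_circlePhase_ne_zero_of_sin_eq_zero hsin hp1
      (fun hp2 ↦ hp (Prod.ext hp1 hp2)) (hzero (b + 3) (by simp))
  rcases eq_or_ne (Real.cos t) 0 with hcos | hcos
  · have hp2 : p.2 = 0 := by simpa [hsin, hcos, hb0] using hsecond'
    exact iteratedDeriv_circlePhase_ne_zero_of_cos_eq_zero hcos
      (fun hp1 ↦ hp (Prod.ext hp1 hp2)) hp2 (hzero (a + 3) (by simp))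
  · exact hp (eq_zero_of_deriv_circlePhase_eq_zero a.succ_pos b.succ_pos hsin hcos hfirst hsecond)

variable {ψ : ℝ → ℝ} {x y : ℝ}

theorem exists_norm_integral_smul_exp_circlePhase_le_of_one_le_norm (ha : 3 ≤ a) (hb : 3 ≤ b)
    (hψ : ContDiff ℝ 1 ψ) (hxy : x ≤ y) :
    ∃ C, ∀ p : ℝ × ℝ, 1 ≤ ‖p‖ →
      ‖∫ t in x..y, ψ t • Complex.exp (Complex.I * circlePhase a b p t)‖ ≤
        C * ‖p‖ ^ (-((max a b : ℕ) : ℝ)⁻¹) := by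
  obtain ⟨C, hC⟩ := exists_norm_integral_exp_const_mul_le_of_isCompact (x := x) (y := y)
    (isCompact_sphere (0 : ℝ × ℝ) 1) (fun p _ ↦ contDiff_circlePhase)
    (fun k _ ↦ (continuous_iteratedDeriv_circlePhase k).continuousOn)
    fun p hp t _ ↦ exists_iteratedDeriv_circlePhase_ne_zero ha hb
      (ne_zero_of_mem_unit_sphere ⟨p, hp⟩) t
  refine ⟨C * (|ψ y| + ∫ t in x..y, |deriv ψ t|), fun p hp ↦ ?_⟩
  have hp0 : p ≠ 0 := norm_pos_iff.1 (one_pos.trans_le hp)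
  have hunit : ‖p‖⁻¹ • p ∈ Metric.sphere (0 : ℝ × ℝ) 1 := by
    rw [mem_sphere_zero_iff_norm, norm_smul, norm_inv, norm_norm,
      inv_mul_cancel₀ (norm_ne_zero_iff.2 hp0)]
  have hphase : ∀ t, circlePhase a b p t = ‖p‖ * circlePhase a b (‖p‖⁻¹ • p) t := fun t ↦ by
    rw [← circlePhase_smul, smul_inv_smul₀ (norm_ne_zero_iff.2 hp0)]
  have hosc := norm_integral_smul_le_of_norm_primitive_le
    (f := fun t ↦ Complex.exp (Complex.I * circlePhase a b p t)) hxy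
    (fun t _ ↦ (hψ.differentiable one_ne_zero t).hasDerivAt)
    (hψ.continuous_deriv le_rfl).continuousOn
    (by have := (contDiff_circlePhase (a := a) (b := b) (p := p) (r := 0)).continuous; fun_prop)
    fun u hu ↦ by simpa only [hphase] using hC _ hunit ‖p‖ hp u hu
  exact hosc.trans_eq (by ring)

theorem exists_norm_integral_smul_exp_circlePhase_le (ha : 3 ≤ a) (hb : 3 ≤ b)
    (hψ : ContDiff ℝ 1 ψ) (hxy : x ≤ y) {δ : ℝ} (hδ0 : 0 ≤ δ) (hδa : δ * a ≤ 1)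
    (hδb : δ * b ≤ 1) :
    ∃ C, 0 ≤ C ∧ ∀ p : ℝ × ℝ, p ≠ 0 →
      ‖∫ t in x..y, ψ t • Complex.exp (Complex.I * circlePhase a b p t)‖ ≤ C * ‖p‖ ^ (-δ) := by
  obtain ⟨C, hC⟩ := exists_norm_integral_smul_exp_circlePhase_le_of_one_le_norm ha hb hψ hxy
  set C₀ := ∫ t in x..y, |ψ t|
  have hC0 : 0 ≤ max C C₀ :=
    le_max_of_le_right (intervalIntegral.integral_nonneg hxy fun t _ ↦ abs_nonneg _)
  refine ⟨max C C₀, hC0, fun p hp ↦ ?_⟩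
  have hp0 : 0 < ‖p‖ := norm_pos_iff.2 hp
  rcases le_total 1 ‖p‖ with hlarge | hsmall
  · refine (hC p hlarge).trans (mul_le_mul (le_max_left _ _) ?_ (by positivity) hC0)
    refine Real.rpow_le_rpow_of_exponent_le hlarge (neg_le_neg ?_)
    rw [← one_div, le_div_iff₀ (by positivity)]
    rcases max_choice a b with h | h <;> rwa [h]
  · calc _ ≤ C₀ := by
          refine intervalIntegral.norm_integral_le_of_norm_le hxy (.of_forall fun t _ ↦ ?_)
            (hψ.continuous.abs.intervalIntegrable _ _)
          rw [norm_smul, Complex.norm_exp_I_mul_ofReal, mul_one, Real.norm_eq_abs]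
      _ ≤ max C C₀ * 1 := by rw [mul_one]; exact le_max_right _ _
      _ ≤ _ := by
          gcongr
          exact Real.one_le_rpow_of_pos_of_le_one_of_nonpos hp0 hsmall (by linarith)

end CirclePhase

section SphereMeasure

variable {E : Type*} [NormedAddCommGroup E] [InnerProductSpace ℝ E]

/- The projection from the pole `v` maps the hemisphere opposite to `v` into the ball of radius
`2`, on which the inverse projection is Lipschitz. -/
theorem mem_image_stereoInvFunAux_of_inner_nonpos {v x : E} (hv : ‖v‖ = 1) (hx : ‖x‖ = 1)
    (hvx : inner ℝ v x ≤ 0) :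
    x ∈ (fun w : (ℝ ∙ v)ᗮ ↦ stereoInvFunAux v w) '' Metric.closedBall 0 2 := by
  have hxv : x ≠ v := by
    rintro rfl
    rw [real_inner_self_eq_norm_sq, hx] at hvx
    norm_num at hvx
  refine ⟨stereoToFun v x, ?_, congrArg Subtype.val
    (stereo_left_inv hv (x := ⟨x, mem_sphere_zero_iff_norm.2 hx⟩) hxv)⟩
  rw [mem_closedBall_zero_iff, stereoToFun_apply, norm_smul, innerSL_apply_apply,
    Real.norm_of_nonneg (div_nonneg zero_le_two (by linarith))]
  have hproj := (ℝ ∙ v)ᗮ.norm_orthogonalProjectionOnto_apply_le x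
  rw [hx] at hproj
  have hfactor : 2 / (1 - inner ℝ v x) ≤ 2 := div_le_self zero_le_two (by linarith)
  nlinarith [norm_nonneg ((ℝ ∙ v)ᗮ.orthogonalProjectionOnto x)]

variable [MeasurableSpace E] [BorelSpace E]

variable (E) in
/-- The surface measure of the unit sphere, as a measure on the ambient space: the
codimension-one Hausdorff measure restricted to the sphere. -/
noncomputable def sphereMeasure : Measure E :=
  μH[(Module.finrank ℝ E : ℝ) - 1].restrict (Metric.sphere 0 1)

theorem ae_sphereMeasure_norm_eq_one : ∀ᵐ x ∂sphereMeasure E, ‖x‖ = 1 :=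
  (ae_restrict_mem Metric.isClosed_sphere.measurableSet).mono fun _ ↦ mem_sphere_zero_iff_norm.1

theorem measurePreserving_sphereMeasure (e : E ≃ₗᵢ[ℝ] E) :
    MeasurePreserving e (sphereMeasure E) (sphereMeasure E) := by
  have hpres := (e.toIsometryEquiv.measurePreserving_hausdorffMeasure
    ((Module.finrank ℝ E : ℝ) - 1)).restrict_preimage (s := Metric.sphere 0 1)
    Metric.isClosed_sphere.measurableSet
  rwa [LinearIsometryEquiv.coe_toIsometryEquiv, e.preimage_sphere, map_zero] at hpres

variable [FiniteDimensional ℝ E]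

theorem hausdorffMeasure_image_stereoInvFunAux_lt_top {v : E} (hv : v ≠ 0) :
    μH[(Module.finrank ℝ E : ℝ) - 1]
      ((fun w : (ℝ ∙ v)ᗮ ↦ stereoInvFunAux v w) '' Metric.closedBall 0 2) < ∞ := by
  obtain ⟨K, hK⟩ := (contDiff_stereoInvFunAux (v := v).comp
    (ℝ ∙ v)ᗮ.subtypeL.contDiff).contDiffOn.exists_lipschitzOnWith (n := 1) one_ne_zero
      (convex_closedBall 0 2) (isCompact_closedBall 0 2)
  have hdim : (Module.finrank ℝ E : ℝ) - 1 = Module.finrank ℝ (ℝ ∙ v)ᗮ := by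
    rw [sub_eq_iff_eq_add, ← (ℝ ∙ v).finrank_add_finrank_orthogonal, finrank_span_singleton hv]
    push_cast
    ring
  rw [hdim]
  exact (hK.hausdorffMeasure_image_le (Nat.cast_nonneg _)).trans_lt (ENNReal.mul_lt_top
    (ENNReal.rpow_lt_top_of_nonneg (Nat.cast_nonneg _) ENNReal.coe_ne_top)
    (isCompact_closedBall 0 2).measure_lt_top)

instance isFiniteMeasure_sphereMeasure : IsFiniteMeasure (sphereMeasure E) where
  measure_univ_lt_top := by
    rw [sphereMeasure, Measure.restrict_apply_univ]
    rcases (Metric.sphere (0 : E) 1).eq_empty_or_nonempty with hempty | ⟨v, hv⟩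
    · simp [hempty]
    rw [mem_sphere_zero_iff_norm] at hv
    have hv0 : v ≠ 0 := norm_ne_zero_iff.1 (hv.trans_ne one_ne_zero)
    refine (measure_mono fun x hx ↦ ?_).trans_lt (measure_union_lt_top
      (hausdorffMeasure_image_stereoInvFunAux_lt_top hv0)
      (hausdorffMeasure_image_stereoInvFunAux_lt_top (neg_ne_zero.2 hv0)))
    rw [mem_sphere_zero_iff_norm] at hx
    rcases le_total (inner ℝ v x) 0 with hvx | hvx
    · exact .inl (mem_image_stereoInvFunAux_of_inner_nonpos hv hx hvx)
    · exact .inr (mem_image_stereoInvFunAux_of_inner_nonpos (by rwa [norm_neg]) hx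
        (by rwa [inner_neg_left, neg_nonpos]))

theorem integrable_sphereMeasure {F : E → ℂ} (hF : Continuous F) :
    Integrable F (sphereMeasure E) := by
  obtain ⟨C, hC⟩ := (isCompact_sphere (0 : E) 1).exists_bound_of_continuousOn hF.continuousOn
  exact .of_bound hF.aestronglyMeasurable C
    (ae_sphereMeasure_norm_eq_one.mono fun x hx ↦ hC x (mem_sphere_zero_iff_norm.2 hx))

theorem norm_integral_sphereMeasure_le_of_average {e : ℝ → E ≃ₗᵢ[ℝ] E}
    (he : Continuous fun q : ℝ × E ↦ e q.1 q.2) {F : E → ℂ} (hF : Continuous F) {T D : ℝ}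
    (hT : 0 ≤ T) (hD : ∀ x, ‖x‖ = 1 → ‖∫ θ in (0)..T, F (e θ x)‖ ≤ D) :
    T * ‖∫ x, F x ∂sphereMeasure E‖ ≤ D * (sphereMeasure E).real Set.univ := by
  have hinv (θ : ℝ) : ∫ x, F (e θ x) ∂sphereMeasure E = ∫ x, F x ∂sphereMeasure E :=
    (measurePreserving_sphereMeasure (e θ)).integral_comp
      (e θ).toHomeomorph.measurableEmbedding F
  have hint : Integrable (Function.uncurry fun θ x ↦ F (e θ x))
      ((volume.restrict (Set.uIoc 0 T)).prod (sphereMeasure E)) := by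
    obtain ⟨C, hC⟩ := (isCompact_sphere (0 : E) 1).exists_bound_of_continuousOn hF.continuousOn
    have : IsFiniteMeasure (volume.restrict (Set.uIoc 0 T)) := ⟨by simp⟩
    refine .of_bound (hF.comp he).aestronglyMeasurable C ?_
    filter_upwards [Measure.quasiMeasurePreserving_snd.ae ae_sphereMeasure_norm_eq_one] with q hq
    exact hC _ (mem_sphere_zero_iff_norm.2 (((e q.1).norm_map q.2).trans hq))
  calc T * ‖∫ x, F x ∂sphereMeasure E‖
      = ‖∫ θ in (0)..T, ∫ x, F (e θ x) ∂sphereMeasure E‖ := by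
        simp only [hinv, intervalIntegral.integral_const, norm_smul, sub_zero,
          Real.norm_of_nonneg hT]
    _ = ‖∫ x, (∫ θ in (0)..T, F (e θ x)) ∂sphereMeasure E‖ := by
        rw [intervalIntegral_integral_swap hint]
    _ ≤ D * (sphereMeasure E).real Set.univ :=
        norm_integral_le_of_norm_le_const (ae_sphereMeasure_norm_eq_one.mono hD)

end SphereMeasure

section PlaneRotation

variable {ι : Type*} [Fintype ι] [DecidableEq ι] {i j : ι}

theorem sum_eq_add_sum_compl_pair {M : Type*} [AddCommMonoid M] (hij : i ≠ j) (g : ι → M) :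
    ∑ k, g k = (g i + g j) + ∑ k ∈ {i, j}ᶜ, g k := by
  rw [← Finset.sum_pair hij, Finset.sum_add_sum_compl]

/-- The rotation by the angle `θ` in the plane of the coordinates `i` and `j`, fixing all other
coordinates. -/
noncomputable def planeRotation (hij : i ≠ j) (θ : ℝ) :
    EuclideanSpace ℝ ι ≃ₗᵢ[ℝ] EuclideanSpace ℝ ι :=
  LinearIsometry.toLinearIsometryEquiv
    { toFun x := WithLp.toLp 2 fun k ↦
        if k = i then Real.cos θ * x i - Real.sin θ * x j
        else if k = j then Real.sin θ * x i + Real.cos θ * x j else x k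
      map_add' x y := by
        ext k
        simp only [PiLp.add_apply]
        split_ifs <;> ring
      map_smul' c x := by
        ext k
        simp only [PiLp.smul_apply, smul_eq_mul, RingHom.id_apply]
        split_ifs <;> ring
      norm_map' x := by
        rw [← sq_eq_sq₀ (norm_nonneg _) (norm_nonneg _), EuclideanSpace.real_norm_sq_eq,
          EuclideanSpace.real_norm_sq_eq, sum_eq_add_sum_compl_pair hij,
          sum_eq_add_sum_compl_pair hij fun k ↦ x k ^ 2]
        congr 1
        · simp only [LinearMap.coe_mk, AddHom.coe_mk, if_true, if_neg hij.symm]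
          linear_combination (x i ^ 2 + x j ^ 2) * Real.sin_sq_add_cos_sq θ
        · refine Finset.sum_congr rfl fun k hk ↦ ?_
          obtain ⟨hki, hkj⟩ : k ≠ i ∧ k ≠ j := by simpa using hk
          simp only [LinearMap.coe_mk, AddHom.coe_mk, if_neg hki, if_neg hkj] }
    rfl

variable (hij : i ≠ j) (θ : ℝ) (x : EuclideanSpace ℝ ι)

theorem planeRotation_apply_left :
    planeRotation hij θ x i = Real.cos θ * x i - Real.sin θ * x j :=
  if_pos rfl

theorem planeRotation_apply_right :
    planeRotation hij θ x j = Real.sin θ * x i + Real.cos θ * x j :=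
  (if_neg hij.symm).trans (if_pos rfl)

theorem planeRotation_apply_of_ne {k : ι} (hki : k ≠ i) (hkj : k ≠ j) :
    planeRotation hij θ x k = x k :=
  (if_neg hki).trans (if_neg hkj)

theorem continuous_planeRotation :
    Continuous fun q : ℝ × EuclideanSpace ℝ ι ↦ planeRotation hij q.1 q.2 := by
  refine (PiLp.continuous_toLp 2 _).comp (continuous_pi fun k ↦ ?_)
  dsimp only
  split_ifs <;> fun_prop

end PlaneRotation

section SphereDecay

variable {ι : Type*} [Fintype ι]

/-- The phase `∑ ξₖ xₖ^{αₖ}`; the phase of `T_{α,m}` is the case `ξₖ = yₖᵐ`. -/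
def powerPhase (α : ι → ℕ) (ξ : ι → ℝ) (x : EuclideanSpace ℝ ι) : ℝ :=
  ∑ k, ξ k * x k ^ α k

theorem continuous_powerPhase (α : ι → ℕ) (ξ : ι → ℝ) : Continuous (powerPhase α ξ) := by
  unfold powerPhase
  fun_prop

theorem exists_polar (u v : ℝ) :
    ∃ r τ : ℝ, 0 ≤ r ∧ u = r * Real.cos τ ∧ v = r * Real.sin τ :=
  ⟨‖(⟨u, v⟩ : ℂ)‖, Complex.arg ⟨u, v⟩, norm_nonneg _, (Complex.norm_mul_cos_arg ⟨u, v⟩).symm,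
    (Complex.norm_mul_sin_arg ⟨u, v⟩).symm⟩

variable {α : ι → ℕ} {i j : ι} {ξ : ι → ℝ}

theorem powerPhase_planeRotation [DecidableEq ι] (hij : i ≠ j) {x : EuclideanSpace ℝ ι} {r τ : ℝ}
    (hxi : x i = r * Real.cos τ) (hxj : x j = r * Real.sin τ) (θ : ℝ) :
    powerPhase α ξ (planeRotation hij θ x) =
      circlePhase (α i) (α j) (ξ i * r ^ α i, ξ j * r ^ α j) (θ + τ) +
        ∑ k ∈ {i, j}ᶜ, ξ k * x k ^ α k := by
  rw [powerPhase, sum_eq_add_sum_compl_pair hij, planeRotation_apply_left,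
    planeRotation_apply_right, hxi, hxj, circlePhase, Real.cos_add, Real.sin_add]
  congr 1
  · simp only [mul_assoc, ← mul_pow]
    ring
  · refine Finset.sum_congr rfl fun k hk ↦ ?_
    obtain ⟨hki, hkj⟩ : k ≠ i ∧ k ≠ j := by simpa using hk
    rw [planeRotation_apply_of_ne hij θ x hki hkj]

/- The weight contributes `r²`, where `r² = xᵢ² + xⱼ²`, which will absorb the negative power of `r`
in the decay estimate on the circle of radius `r`. -/
theorem norm_integral_planeRotation_eq [DecidableEq ι] (hij : i ≠ j) (ν : ℝ)
    {x : EuclideanSpace ℝ ι} {r τ : ℝ} (hxi : x i = r * Real.cos τ) (hxj : x j = r * Real.sin τ) :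
    ‖∫ θ in (0)..2 * Real.pi,
        (planeRotation hij θ x j ^ 2 + ν * planeRotation hij θ x i ^ 2) •
          Complex.exp (Complex.I * powerPhase α ξ (planeRotation hij θ x))‖ =
      r ^ 2 * ‖∫ t in (0)..2 * Real.pi, (Real.sin t ^ 2 + ν * Real.cos t ^ 2) •
        Complex.exp (Complex.I * circlePhase (α i) (α j) (ξ i * r ^ α i, ξ j * r ^ α j) t)‖ := by
  set G : ℝ → ℂ := fun t ↦ (Real.sin t ^ 2 + ν * Real.cos t ^ 2) •
    Complex.exp (Complex.I * circlePhase (α i) (α j) (ξ i * r ^ α i, ξ j * r ^ α j) t)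
  have hG : Function.Periodic G (2 * Real.pi) := fun t ↦ by
    simp only [G, circlePhase, Real.sin_add_two_pi, Real.cos_add_two_pi]
  obtain ⟨c, hc⟩ : ∃ c, ∀ θ, powerPhase α ξ (planeRotation hij θ x) =
      circlePhase (α i) (α j) (ξ i * r ^ α i, ξ j * r ^ α j) (θ + τ) + c :=
    ⟨_, powerPhase_planeRotation hij hxi hxj⟩
  have horbit : ∀ θ, (planeRotation hij θ x j ^ 2 + ν * planeRotation hij θ x i ^ 2) •
      Complex.exp (Complex.I * powerPhase α ξ (planeRotation hij θ x)) =
        (r ^ 2 * Complex.exp (Complex.I * c)) * G (θ + τ) := fun θ ↦ by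
    rw [hc, planeRotation_apply_left, planeRotation_apply_right, hxi, hxj, Complex.ofReal_add,
      mul_add, Complex.exp_add]
    simp only [G, Real.cos_add, Real.sin_add, Complex.real_smul]
    push_cast
    ring
  simp only [horbit]
  rw [intervalIntegral.integral_const_mul, intervalIntegral.integral_comp_add_right, zero_add,
    add_comm (2 * Real.pi), hG.intervalIntegral_add_eq τ 0, zero_add, norm_mul, norm_mul,
    Complex.norm_exp_I_mul_ofReal, mul_one, norm_pow, Complex.norm_real, Real.norm_eq_abs, sq_abs]

theorem sq_add_sq_le_norm_sq (hij : i ≠ j) (x : EuclideanSpace ℝ ι) :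
    x i ^ 2 + x j ^ 2 ≤ ‖x‖ ^ 2 := by
  classical
  rw [EuclideanSpace.real_norm_sq_eq, sum_eq_add_sum_compl_pair hij]
  exact le_add_of_nonneg_right (Finset.sum_nonneg fun k _ ↦ sq_nonneg _)

theorem sq_mul_norm_rpow_neg_le {r A B δ : ℝ} {a : ℕ} (hr : 0 < r) (hr1 : r ≤ 1) (hA : A ≠ 0)
    (hδ0 : 0 ≤ δ) (hδa : δ * a ≤ 2) : r ^ 2 * ‖(A * r ^ a, B)‖ ^ (-δ) ≤ |A| ^ (-δ) := by
  have hA0 : 0 < |A| := abs_pos.2 hA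
  have hAr : 0 < |A| * r ^ a := by positivity
  calc r ^ 2 * ‖(A * r ^ a, B)‖ ^ (-δ) ≤ r ^ 2 * (|A| * r ^ a) ^ (-δ) := by
        gcongr r ^ 2 * ?_
        refine Real.rpow_le_rpow_of_nonpos hAr ?_ (neg_nonpos.2 hδ0)
        simp [abs_of_pos hr]
    _ = r ^ (2 - a * δ) * |A| ^ (-δ) := by
        rw [Real.mul_rpow hA0.le (by positivity), ← Real.rpow_natCast r a, ← Real.rpow_mul hr.le,
          sub_eq_add_neg, Real.rpow_add hr, Real.rpow_two, mul_neg]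
        ring
    _ ≤ |A| ^ (-δ) :=
        mul_le_of_le_one_left (by positivity)
          (Real.rpow_le_one hr.le hr1 (by linarith [mul_comm δ (a : ℝ)]))

theorem exists_norm_integral_weight_smul_exp_powerPhase_le (hij : i ≠ j) (ν : ℝ)
    (hi : 3 ≤ α i) (hj : 3 ≤ α j) {δ : ℝ} (hδ0 : 0 ≤ δ) (hδi : δ * α i ≤ 1) (hδj : δ * α j ≤ 1) :
    ∃ C, 0 ≤ C ∧ ∀ ξ : ι → ℝ, ξ i ≠ 0 →
      ‖∫ x, (x j ^ 2 + ν * x i ^ 2) • Complex.exp (Complex.I * powerPhase α ξ x)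
        ∂sphereMeasure (EuclideanSpace ℝ ι)‖ ≤ C * |ξ i| ^ (-δ) := by
  classical
  have hpi : 0 < 2 * Real.pi := by positivity
  obtain ⟨C, hC0, hC⟩ := exists_norm_integral_smul_exp_circlePhase_le
    (ψ := fun t ↦ Real.sin t ^ 2 + ν * Real.cos t ^ 2) hi hj (by fun_prop) hpi.le hδ0 hδi hδj
  set σ := (sphereMeasure (EuclideanSpace ℝ ι)).real Set.univ
  refine ⟨C * σ / (2 * Real.pi), by positivity, fun ξ hξ ↦ ?_⟩
  have havg : 2 * Real.pi * ‖∫ x, (x j ^ 2 + ν * x i ^ 2) •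
      Complex.exp (Complex.I * powerPhase α ξ x) ∂sphereMeasure (EuclideanSpace ℝ ι)‖ ≤
        C * |ξ i| ^ (-δ) * σ := by
    refine norm_integral_sphereMeasure_le_of_average (continuous_planeRotation hij)
      (by have := continuous_powerPhase α ξ; fun_prop) hpi.le fun x hx ↦ ?_
    obtain ⟨r, τ, hr, hxi, hxj⟩ := exists_polar (x i) (x j)
    rw [norm_integral_planeRotation_eq hij ν hxi hxj]
    rcases hr.eq_or_lt with rfl | hr0
    · rw [zero_pow two_ne_zero, zero_mul]
      positivity
    have hr1 : r ≤ 1 := by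
      have hsq := sq_add_sq_le_norm_sq hij x
      rw [hx, hxi, hxj, mul_pow, mul_pow, ← mul_add, Real.cos_sq_add_sin_sq, mul_one] at hsq
      exact (pow_le_pow_iff_left₀ hr zero_le_one two_ne_zero).1 hsq
    have hp : (ξ i * r ^ α i, ξ j * r ^ α j) ≠ 0 := by simp [hξ, hr0.ne']
    calc _ ≤ r ^ 2 * (C * ‖(ξ i * r ^ α i, ξ j * r ^ α j)‖ ^ (-δ)) := by gcongr; exact hC _ hp
      _ = C * (r ^ 2 * ‖(ξ i * r ^ α i, ξ j * r ^ α j)‖ ^ (-δ)) := by ring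
      _ ≤ C * |ξ i| ^ (-δ) := by
          gcongr
          exact sq_mul_norm_rpow_neg_le hr0 hr1 hξ hδ0 (by linarith)
  rw [div_mul_eq_mul_div, le_div_iff₀ hpi]
  linarith

theorem sum_erase_weight_eq_norm_sq [DecidableEq ι] (hι : 2 ≤ Fintype.card ι) (i : ι)
    (x : EuclideanSpace ℝ ι) :
    ∑ j ∈ Finset.univ.erase i, (x j ^ 2 + ((Fintype.card ι : ℝ) - 1)⁻¹ * x i ^ 2) = ‖x‖ ^ 2 := by
  have hcard : ((Fintype.card ι : ℝ) - 1) ≠ 0 := by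
    have : (2 : ℝ) ≤ Fintype.card ι := mod_cast hι
    linarith
  rw [Finset.sum_add_distrib, Finset.sum_const, Finset.card_erase_of_mem (Finset.mem_univ i),
    Finset.card_univ, nsmul_eq_mul, Nat.cast_sub (by lia), Nat.cast_one, mul_inv_cancel_left₀ hcard,
    Finset.sum_erase_add _ _ (Finset.mem_univ i), EuclideanSpace.real_norm_sq_eq]

theorem exists_norm_integral_exp_powerPhase_le (hι : 2 ≤ Fintype.card ι) (hα : ∀ k, 3 ≤ α k)
    {δ : ℝ} (hδ0 : 0 ≤ δ) (hδ : ∀ k, δ * α k ≤ 1) (i : ι) :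
    ∃ C, 0 ≤ C ∧ ∀ ξ : ι → ℝ, ξ i ≠ 0 →
      ‖∫ x, Complex.exp (Complex.I * powerPhase α ξ x) ∂sphereMeasure (EuclideanSpace ℝ ι)‖ ≤
        C * |ξ i| ^ (-δ) := by
  classical
  set ν := ((Fintype.card ι : ℝ) - 1)⁻¹ with hν
  have hweight : ∀ j : ι, ∃ C, 0 ≤ C ∧ (j ≠ i → ∀ ξ : ι → ℝ, ξ i ≠ 0 →
      ‖∫ x, (x j ^ 2 + ν * x i ^ 2) • Complex.exp (Complex.I * powerPhase α ξ x)
        ∂sphereMeasure (EuclideanSpace ℝ ι)‖ ≤ C * |ξ i| ^ (-δ)) := fun j ↦ by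
    rcases eq_or_ne j i with hji | hji
    · exact ⟨0, le_rfl, fun h ↦ absurd hji h⟩
    · obtain ⟨C, hC0, hC⟩ := exists_norm_integral_weight_smul_exp_powerPhase_le hji.symm ν (hα i)
        (hα j) hδ0 (hδ i) (hδ j)
      exact ⟨C, hC0, fun _ ↦ hC⟩
  choose C hC0 hC using hweight
  refine ⟨∑ j ∈ Finset.univ.erase i, C j, Finset.sum_nonneg fun j _ ↦ hC0 j, fun ξ hξ ↦ ?_⟩
  have hsum : ∫ x, Complex.exp (Complex.I * powerPhase α ξ x)
        ∂sphereMeasure (EuclideanSpace ℝ ι) =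
      ∑ j ∈ Finset.univ.erase i, ∫ x, (x j ^ 2 + ν * x i ^ 2) •
        Complex.exp (Complex.I * powerPhase α ξ x) ∂sphereMeasure (EuclideanSpace ℝ ι) := by
    rw [← integral_finsetSum]
    · refine integral_congr_ae (ae_sphereMeasure_norm_eq_one.mono fun x hx ↦ ?_)
      simp only
      rw [← Finset.sum_smul, hν, sum_erase_weight_eq_norm_sq hι, hx, one_pow, one_smul]
    · exact fun j _ ↦ integrable_sphereMeasure
        (by have := continuous_powerPhase α ξ; fun_prop)
  rw [hsum, Finset.sum_mul]
  exact norm_sum_le_of_le _ fun j hj ↦ hC j (Finset.ne_of_mem_erase hj) ξ hξ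

end SphereDecay

section RieszKernel

/-- The Riesz kernel `|t|⁻ˢ` on the line, with the value `∞` at the singularity `t = 0` when
`0 < s`. -/
noncomputable def rieszKernel (s t : ℝ) : ℝ≥0∞ :=
  ENNReal.ofReal |t| ^ (-s)

@[fun_prop]
theorem measurable_rieszKernel (s : ℝ) : Measurable (rieszKernel s) := by
  unfold rieszKernel
  fun_prop

theorem rieszKernel_of_ne_zero {t : ℝ} (ht : t ≠ 0) (s : ℝ) :
    rieszKernel s t = ENNReal.ofReal (|t| ^ (-s)) :=
  ENNReal.ofReal_rpow_of_pos (abs_pos.2 ht)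

theorem rieszKernel_zero_right {s : ℝ} (hs : 0 < s) : rieszKernel s 0 = ∞ := by
  rw [rieszKernel, abs_zero, ENNReal.ofReal_zero, ENNReal.zero_rpow_of_neg (neg_lt_zero.2 hs)]

theorem rieszKernel_ne_top {t : ℝ} (ht : t ≠ 0) (s : ℝ) : rieszKernel s t ≠ ∞ := by
  rw [rieszKernel_of_ne_zero ht]
  exact ENNReal.ofReal_ne_top

theorem rieszKernel_ne_zero {s : ℝ} (hs : 0 ≤ s) (t : ℝ) : rieszKernel s t ≠ 0 := by
  rw [rieszKernel, ENNReal.rpow_neg]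
  exact ENNReal.inv_ne_zero.2 (ENNReal.rpow_ne_top_of_nonneg hs ENNReal.ofReal_ne_top)

theorem rieszKernel_neg (s t : ℝ) : rieszKernel s (-t) = rieszKernel s t := by
  rw [rieszKernel, abs_neg, rieszKernel]

theorem rieszKernel_mul (s t u : ℝ) :
    rieszKernel s (t * u) = rieszKernel s t * rieszKernel s u := by
  rw [rieszKernel, abs_mul, ENNReal.ofReal_mul (abs_nonneg _),
    ENNReal.mul_rpow_of_ne_top ENNReal.ofReal_ne_top ENNReal.ofReal_ne_top, rieszKernel,
    rieszKernel]

theorem rieszKernel_pow (s t : ℝ) (m : ℕ) : rieszKernel s (t ^ m) = rieszKernel (m * s) t := by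
  rw [rieszKernel, abs_pow, ENNReal.ofReal_pow (abs_nonneg _), ← ENNReal.rpow_natCast,
    ← ENNReal.rpow_mul, mul_neg, rieszKernel]

theorem rieszKernel_mul_left (r s t : ℝ) : rieszKernel (r * s) t = rieszKernel r t ^ s := by
  rw [rieszKernel, ← neg_mul, ENNReal.rpow_mul, rieszKernel]

theorem rieszKernel_add_left {t : ℝ} (ht : t ≠ 0) (r s : ℝ) :
    rieszKernel (r + s) t = rieszKernel r t * rieszKernel s t := by
  rw [rieszKernel, neg_add, ENNReal.rpow_add _ _ (by simpa using ht) ENNReal.ofReal_ne_top,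
    rieszKernel, rieszKernel]

theorem rieszKernel_anti {s t u : ℝ} (hs : 0 ≤ s) (h : |t| ≤ |u|) :
    rieszKernel s u ≤ rieszKernel s t := by
  rw [rieszKernel, rieszKernel, ENNReal.rpow_neg, ENNReal.rpow_neg, ENNReal.inv_le_inv]
  gcongr

theorem setLIntegral_rieszKernel_sub_lt_top {s : ℝ} (hs : s < 1) (a r : ℝ) :
    ∫⁻ t in Metric.closedBall 0 r, rieszKernel s (t - a) < ∞ := by
  have hloc : LocallyIntegrable (fun t : ℝ ↦ |t| ^ (-s)) :=
    locallyIntegrable_of_norm_le_rpow (C := 1) (by simp) (by simpa using hs)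
      (.of_forall fun t ↦ by rw [one_mul, Real.norm_of_nonneg (by positivity), Real.norm_eq_abs])
      (measurable_id.abs.pow_const _).aestronglyMeasurable
  have hshift : (fun t : ℝ ↦ t - a) ⁻¹' Metric.closedBall (-a) r = Metric.closedBall 0 r := by
    ext t
    simp
  rw [← hshift, (measurePreserving_sub_right volume a).setLIntegral_comp_preimage
    measurableSet_closedBall (measurable_rieszKernel s)]
  have hne : ∀ᵐ t : ℝ ∂volume.restrict (Metric.closedBall (-a) r), t ≠ 0 :=
    ae_restrict_of_ae (Measure.ae_ne volume 0)
  rw [lintegral_congr_ae (hne.mono fun t ht ↦ rieszKernel_of_ne_zero ht s)]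
  exact (hloc.integrableOn_isCompact (isCompact_closedBall _ _)).lintegral_lt_top

theorem setLIntegral_compl_closedBall_rieszKernel_lt_top {s : ℝ} (hs : 1 < s) :
    ∫⁻ t in (Metric.closedBall 0 2)ᶜ, rieszKernel s t < ∞ := by
  have hbound : ∀ t ∈ (Metric.closedBall (0 : ℝ) 2)ᶜ, rieszKernel s t ≤
      rieszKernel s (1 / 2) * ENNReal.ofReal ((1 + ‖t‖) ^ (-s)) := fun t ht ↦ by
    rw [Set.mem_compl_iff, mem_closedBall_zero_iff, not_le, Real.norm_eq_abs] at ht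
    have hpos : 0 < 1 + |t| := by positivity
    rw [Real.norm_eq_abs]
    nth_rw 1 [← abs_of_pos hpos]
    rw [← rieszKernel_of_ne_zero hpos.ne', ← rieszKernel_mul]
    refine rieszKernel_anti (by linarith) ?_
    rw [abs_of_pos (by positivity)]
    linarith
  calc ∫⁻ t in (Metric.closedBall 0 2)ᶜ, rieszKernel s t
      ≤ ∫⁻ t : ℝ, rieszKernel s (1 / 2) * ENNReal.ofReal ((1 + ‖t‖) ^ (-s)) :=
        (setLIntegral_mono' measurableSet_closedBall.compl hbound).trans
          (setLIntegral_le_lintegral _ _)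
    _ = rieszKernel s (1 / 2) * ∫⁻ t : ℝ, ENNReal.ofReal ((1 + ‖t‖) ^ (-s)) :=
        lintegral_const_mul' _ _ (rieszKernel_ne_top (by norm_num) s)
    _ < ∞ := ENNReal.mul_lt_top (rieszKernel_ne_top (by norm_num) s).lt_top
        (finite_integral_one_add_norm (by simpa using hs))

end RieszKernel

section PowerKernel

/-- The kernel `|u ^ m - v ^ m| ^ (-1 / m)`, which is homogeneous of degree `-1` and whose Schur
test function is `|v| ^ (-1 / 2)`. -/
noncomputable def powerKernel (m : ℕ) (u v : ℝ) : ℝ≥0∞ :=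
  rieszKernel (1 / m) (u ^ m - v ^ m)

/-- The Schur constant `∫ |1 - t ^ m| ^ (-1 / m) * |t| ^ (-1 / 2) dt` of `powerKernel m`. -/
noncomputable def powerKernelConst (m : ℕ) : ℝ≥0∞ :=
  ∫⁻ t, powerKernel m 1 t * rieszKernel (1 / 2) t

variable {m : ℕ}

theorem abs_abs_sub_one_le_abs_one_sub_pow (hm : m ≠ 0) (t : ℝ) : |(|t| - 1)| ≤ |1 - t ^ m| := by
  have habs : |1 - |t| ^ m| ≤ |1 - t ^ m| := by
    simpa using abs_abs_sub_abs_le (1 : ℝ) (t ^ m)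
  refine le_trans ?_ habs
  rcases le_total |t| 1 with h | h
  · have hpow := pow_le_of_le_one (abs_nonneg t) h hm
    rw [abs_of_nonpos (sub_nonpos.2 h)]
    linarith [le_abs_self (1 - |t| ^ m)]
  · have hpow := le_self_pow₀ h hm
    rw [abs_of_nonneg (sub_nonneg.2 h)]
    linarith [neg_le_abs (1 - |t| ^ m)]

theorem powerKernel_one_mul_rieszKernel_le (hm : m ≠ 0) (t : ℝ) :
    powerKernel m 1 t * rieszKernel (1 / 2) t ≤
      rieszKernel (1 / m) (1 / 2) * rieszKernel (1 / 2) t +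
        rieszKernel (1 / 2) (1 / 2) *
          (rieszKernel (1 / m) (t - 1) + rieszKernel (1 / m) (t - -1)) := by
  have hs : (0 : ℝ) ≤ 1 / m := by positivity
  have hdist := abs_abs_sub_one_le_abs_one_sub_pow hm t
  rw [powerKernel, one_pow]
  rcases le_total |t| (1 / 2) with ht | ht
  · refine le_add_right (mul_le_mul_left (rieszKernel_anti hs ?_) _)
    rw [abs_of_pos one_half_pos]
    linarith [neg_abs_le (|t| - 1)]
  · refine le_add_left ?_
    rw [mul_comm]
    gcongr
    · exact rieszKernel_anti (by norm_num) (by rwa [abs_of_pos one_half_pos])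
    · rcases abs_cases t with ⟨h, -⟩ | ⟨h, -⟩
      · exact le_add_right (rieszKernel_anti hs (by rwa [h] at hdist))
      · refine le_add_left (rieszKernel_anti hs ?_)
        rwa [h, ← neg_add', abs_neg, ← sub_neg_eq_add] at hdist

theorem powerKernel_one_mul_rieszKernel_le_of_two_le_abs (hm : m ≠ 0) {t : ℝ} (ht : 2 ≤ |t|) :
    powerKernel m 1 t * rieszKernel (1 / 2) t ≤
      rieszKernel (1 / m) (1 / 2) * rieszKernel (3 / 2) t := by
  have ht0 : t ≠ 0 := abs_pos.1 (by linarith)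
  have hhalf : |1 / 2 * t ^ m| ≤ |1 - t ^ m| := by
    have hpow : 2 ≤ |t ^ m| := by
      rw [abs_pow]
      exact ht.trans (le_self_pow₀ (by linarith) hm)
    have := abs_sub_abs_le_abs_sub (t ^ m) 1
    rw [abs_one, abs_sub_comm] at this
    rw [abs_mul, abs_of_pos one_half_pos]
    linarith
  calc powerKernel m 1 t * rieszKernel (1 / 2) t
      ≤ rieszKernel (1 / m) (1 / 2 * t ^ m) * rieszKernel (1 / 2) t := by
        rw [powerKernel, one_pow]
        gcongr
        exact rieszKernel_anti (by positivity) hhalf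
    _ = rieszKernel (1 / m) (1 / 2) * rieszKernel (3 / 2) t := by
        rw [rieszKernel_mul, rieszKernel_pow, mul_one_div_cancel (by exact_mod_cast hm), mul_assoc,
          ← rieszKernel_add_left ht0]
        norm_num

theorem powerKernelConst_lt_top (hm : 2 ≤ m) : powerKernelConst m < ∞ := by
  have hm0 : m ≠ 0 := by omega
  have hs : 1 / (m : ℝ) < 1 := by
    rw [div_lt_one (by positivity)]
    exact_mod_cast hm
  have hconst : ∀ s, rieszKernel s (1 / 2) ≠ ∞ := rieszKernel_ne_top (by norm_num)
  rw [powerKernelConst, ← lintegral_add_compl _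
    (measurableSet_closedBall (x := (0 : ℝ)) (ε := 2))]
  refine ENNReal.add_lt_top.2 ⟨?_, ?_⟩
  · refine (lintegral_mono fun t ↦ powerKernel_one_mul_rieszKernel_le hm0 t).trans_lt ?_
    rw [lintegral_add_left (by fun_prop), lintegral_const_mul' _ _ (hconst _),
      lintegral_const_mul' _ _ (hconst _), lintegral_add_left (by fun_prop)]
    have hhalf := setLIntegral_rieszKernel_sub_lt_top one_half_lt_one 0 2
    simp only [sub_zero] at hhalf
    exact ENNReal.add_lt_top.2 ⟨ENNReal.mul_lt_top (hconst _).lt_top hhalf,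
      ENNReal.mul_lt_top (hconst _).lt_top (ENNReal.add_lt_top.2
        ⟨setLIntegral_rieszKernel_sub_lt_top hs 1 2,
          setLIntegral_rieszKernel_sub_lt_top hs (-1) 2⟩)⟩
  · refine (setLIntegral_mono' measurableSet_closedBall.compl fun t ht ↦
      powerKernel_one_mul_rieszKernel_le_of_two_le_abs hm0 ?_).trans_lt ?_
    · rw [Set.mem_compl_iff, mem_closedBall_zero_iff, not_le] at ht
      exact ht.le
    · rw [lintegral_const_mul' _ _ (hconst _)]
      exact ENNReal.mul_lt_top (hconst _).lt_top
        (setLIntegral_compl_closedBall_rieszKernel_lt_top (by norm_num))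

@[fun_prop]
theorem measurable_powerKernel (u : ℝ) : Measurable (powerKernel m u) := by
  unfold powerKernel
  fun_prop

theorem powerKernel_comm (u v : ℝ) : powerKernel m u v = powerKernel m v u := by
  rw [powerKernel, powerKernel, ← rieszKernel_neg, neg_sub]

theorem powerKernel_mul_right (hm : m ≠ 0) (u t : ℝ) :
    powerKernel m u (u * t) = rieszKernel 1 u * powerKernel m 1 t := by
  rw [powerKernel, powerKernel, mul_pow, one_pow, ← mul_one_sub, rieszKernel_mul, rieszKernel_pow,
    mul_one_div_cancel (by exact_mod_cast hm)]

theorem lintegral_powerKernel_mul_rieszKernel (hm : m ≠ 0) {u : ℝ} (hu : u ≠ 0) :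
    ∫⁻ v, powerKernel m u v * rieszKernel (1 / 2) v =
      powerKernelConst m * rieszKernel (1 / 2) u := by
  have hjac : ENNReal.ofReal |u| * rieszKernel 1 u = 1 := by
    rw [rieszKernel, ENNReal.rpow_neg_one,
      ENNReal.mul_inv_cancel (by simpa using hu) ENNReal.ofReal_ne_top]
  calc ∫⁻ v, powerKernel m u v * rieszKernel (1 / 2) v
      = ENNReal.ofReal |u| * ∫⁻ t, powerKernel m u (u * t) * rieszKernel (1 / 2) (u * t) := by
        conv_lhs => rw [← Real.smul_map_volume_mul_left hu]
        rw [lintegral_smul_measure, lintegral_map (by fun_prop) (by fun_prop), smul_eq_mul]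
    _ = ENNReal.ofReal |u| * ∫⁻ t, rieszKernel 1 u * rieszKernel (1 / 2) u *
          (powerKernel m 1 t * rieszKernel (1 / 2) t) := by
        simp only [powerKernel_mul_right hm, rieszKernel_mul, mul_mul_mul_comm]
    _ = powerKernelConst m * rieszKernel (1 / 2) u := by
        rw [lintegral_const_mul _ (by fun_prop), ← powerKernelConst, ← mul_assoc, ← mul_assoc, hjac,
          one_mul, mul_comm]

end PowerKernel

section SchurTest

variable {X : Type*} [MeasurableSpace X] {μ : Measure X}

theorem mul_le_weighted_sq_add_sq {s t : ℝ≥0∞} (hs0 : s ≠ 0) (hs : s ≠ ∞) (ht0 : t ≠ 0)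
    (ht : t ≠ ∞) (a b : ℝ≥0∞) : a * b ≤ a ^ 2 * s⁻¹ * t + b ^ 2 * t⁻¹ * s := by
  rcases le_total (a * t) (b * s) with h | h
  · refine le_add_left ?_
    calc a * b = t⁻¹ * t * (a * b) := by rw [ENNReal.inv_mul_cancel ht0 ht, one_mul]
      _ = a * t * (t⁻¹ * b) := by ring
      _ ≤ b * s * (t⁻¹ * b) := by gcongr
      _ = b ^ 2 * t⁻¹ * s := by ring
  · refine le_add_right ?_
    calc a * b = s⁻¹ * s * (a * b) := by rw [ENNReal.inv_mul_cancel hs0 hs, one_mul]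
      _ = b * s * (s⁻¹ * a) := by ring
      _ ≤ a * t * (s⁻¹ * a) := by gcongr
      _ = a ^ 2 * s⁻¹ * t := by ring

variable {K : X → X → ℝ≥0∞} {H F : X → ℝ≥0∞} {c : ℝ≥0∞}

theorem lintegral_lintegral_sq_mul_inv_mul_mul_le (hK : Measurable (Function.uncurry K))
    (hH : Measurable H) (hH0 : ∀ᵐ y ∂μ, H y ≠ 0) (hHtop : ∀ᵐ y ∂μ, H y ≠ ∞)
    (hschur : ∀ᵐ y ∂μ, ∫⁻ z, K y z * H z ∂μ ≤ c * H y) (hF : AEMeasurable F μ) :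
    ∫⁻ y, ∫⁻ z, F y ^ 2 * (H y)⁻¹ * H z * K y z ∂μ ∂μ ≤ c * ∫⁻ y, F y ^ 2 ∂μ := by
  rw [← lintegral_const_mul'' _ (hF.pow_const 2)]
  refine lintegral_mono_ae ?_
  filter_upwards [hH0, hHtop, hschur] with y hy0 hytop hy
  calc ∫⁻ z, F y ^ 2 * (H y)⁻¹ * H z * K y z ∂μ
      = F y ^ 2 * (H y)⁻¹ * ∫⁻ z, K y z * H z ∂μ := by
        have hKy : Measurable fun z ↦ K y z * H z := (hK.comp measurable_prodMk_left).mul hH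
        rw [← lintegral_const_mul _ hKy]
        exact lintegral_congr fun z ↦ by ring
    _ ≤ F y ^ 2 * (H y)⁻¹ * (c * H y) := by gcongr
    _ = (H y)⁻¹ * H y * (c * F y ^ 2) := by ring
    _ = c * F y ^ 2 := by rw [ENNReal.inv_mul_cancel hy0 hytop, one_mul]

variable [SFinite μ]

theorem lintegral_lintegral_mul_mul_le_of_schur (hK : Measurable (Function.uncurry K))
    (hsymm : ∀ y z, K y z = K z y) (hH : Measurable H) (hH0 : ∀ᵐ y ∂μ, H y ≠ 0)
    (hHtop : ∀ᵐ y ∂μ, H y ≠ ∞) (hschur : ∀ᵐ y ∂μ, ∫⁻ z, K y z * H z ∂μ ≤ c * H y)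
    (hF : AEMeasurable F μ) :
    ∫⁻ y, ∫⁻ z, F y * F z * K y z ∂μ ∂μ ≤ 2 * c * ∫⁻ y, F y ^ 2 ∂μ := by
  have hleft := lintegral_lintegral_sq_mul_inv_mul_mul_le hK hH hH0 hHtop hschur hF
  have hmeas : AEMeasurable (fun q : X × X ↦ F q.1 ^ 2 * (H q.1)⁻¹ * H q.2 * K q.1 q.2)
      (μ.prod μ) :=
    ((((hF.comp_fst (ν := μ)).pow_const 2).mul (by fun_prop)).mul (by fun_prop)).mul
      hK.aemeasurable
  have hright : ∫⁻ y, ∫⁻ z, F z ^ 2 * (H z)⁻¹ * H y * K y z ∂μ ∂μ ≤ c * ∫⁻ y, F y ^ 2 ∂μ := by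
    rw [lintegral_lintegral_swap]
    · simpa only [hsymm] using hleft
    · refine hmeas.prod_swap.congr (.of_forall fun q ↦ ?_)
      simp only [Prod.fst_swap, Prod.snd_swap, Function.uncurry_def, hsymm q.1]
  calc ∫⁻ y, ∫⁻ z, F y * F z * K y z ∂μ ∂μ
      ≤ ∫⁻ y, ∫⁻ z, (F y ^ 2 * (H y)⁻¹ * H z * K y z +
          F z ^ 2 * (H z)⁻¹ * H y * K y z) ∂μ ∂μ := by
        refine lintegral_mono_ae ?_
        filter_upwards [hH0, hHtop] with y hy0 hytop
        refine lintegral_mono_ae ?_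
        filter_upwards [hH0, hHtop] with z hz0 hztop
        rw [← add_mul]
        gcongr
        exact mul_le_weighted_sq_add_sq hy0 hytop hz0 hztop _ _
    _ = ∫⁻ y, ∫⁻ z, F y ^ 2 * (H y)⁻¹ * H z * K y z ∂μ ∂μ +
          ∫⁻ y, ∫⁻ z, F z ^ 2 * (H z)⁻¹ * H y * K y z ∂μ ∂μ := by
        rw [← lintegral_add_left' hmeas.lintegral_prod_right']
        refine lintegral_congr fun y ↦ lintegral_add_left ?_ _
        exact (hH.const_mul _).mul (hK.comp measurable_prodMk_left)
    _ ≤ 2 * c * ∫⁻ y, F y ^ 2 ∂μ := by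
        rw [mul_assoc, two_mul]
        exact add_le_add hleft hright

theorem mul_mul_rpow_eq {p l : ℝ} (hl0 : 0 ≤ l) (hl1 : l ≤ 1) (hpl : p * (1 - l / 2) = 1)
    (a b k : ℝ≥0∞) :
    a * b * k ^ l = (a ^ (p / 2) * b ^ (p / 2) * k) ^ l * (a ^ p * b ^ p) ^ (1 - l) := by
  have hp0 : 0 < p := by nlinarith
  have hl1' : 0 ≤ 1 - l := sub_nonneg.2 hl1
  have hsplit : ∀ a : ℝ≥0∞, a = (a ^ (p / 2)) ^ l * (a ^ p) ^ (1 - l) := fun a ↦ by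
    rw [← ENNReal.rpow_mul, ← ENNReal.rpow_mul, ← ENNReal.rpow_add_of_nonneg _ _ (by positivity)
      (by positivity), show p / 2 * l + p * (1 - l) = 1 by linarith, ENNReal.rpow_one]
  rw [ENNReal.mul_rpow_of_nonneg _ _ hl0, ENNReal.mul_rpow_of_nonneg _ _ hl0,
    ENNReal.mul_rpow_of_nonneg _ _ hl1']
  conv_lhs => rw [hsplit a, hsplit b]
  ring

/- Hölder's inequality interpolates between the `L²` bound at `l = 1` and the trivial `L¹` bound
at `l = 0`. -/
theorem lintegral_lintegral_mul_mul_rpow_le {C : ℝ≥0∞} (hK : Measurable (Function.uncurry K))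
    (hL2 : ∀ F : X → ℝ≥0∞, AEMeasurable F μ →
      ∫⁻ y, ∫⁻ z, F y * F z * K y z ∂μ ∂μ ≤ C * ∫⁻ y, F y ^ 2 ∂μ)
    {p l : ℝ} (hl0 : 0 ≤ l) (hl1 : l ≤ 1) (hpl : p * (1 - l / 2) = 1)
    {g : X → ℝ≥0∞} (hg : AEMeasurable g μ) :
    ∫⁻ y, ∫⁻ z, g y * g z * K y z ^ l ∂μ ∂μ ≤ C ^ l * (∫⁻ y, g y ^ p ∂μ) ^ (2 - l) := by
  have hl1' : 0 ≤ 1 - l := sub_nonneg.2 hl1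
  have := hg.comp_fst (ν := μ)
  have := hg.comp_snd (μ := μ)
  have hK' : AEMeasurable (fun q : X × X ↦ K q.1 q.2) (μ.prod μ) := hK.aemeasurable
  have hsq : ∀ y, (g y ^ (p / 2)) ^ 2 = g y ^ p := fun y ↦ by
    rw [← ENNReal.rpow_natCast, ← ENNReal.rpow_mul]
    norm_num
  calc ∫⁻ y, ∫⁻ z, g y * g z * K y z ^ l ∂μ ∂μ
      = ∫⁻ q, (g q.1 ^ (p / 2) * g q.2 ^ (p / 2) * K q.1 q.2) ^ l *
          (g q.1 ^ p * g q.2 ^ p) ^ (1 - l) ∂μ.prod μ := by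
        simp only [mul_mul_rpow_eq hl0 hl1 hpl]
        rw [lintegral_prod _ (by fun_prop)]
    _ ≤ (∫⁻ q, g q.1 ^ (p / 2) * g q.2 ^ (p / 2) * K q.1 q.2 ∂μ.prod μ) ^ l *
          (∫⁻ q, g q.1 ^ p * g q.2 ^ p ∂μ.prod μ) ^ (1 - l) :=
        ENNReal.lintegral_mul_norm_pow_le (by fun_prop) (by fun_prop) hl0 hl1' (by ring)
    _ ≤ (C * ∫⁻ y, g y ^ p ∂μ) ^ l * ((∫⁻ y, g y ^ p ∂μ) * ∫⁻ y, g y ^ p ∂μ) ^ (1 - l) := by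
        rw [lintegral_prod _ (by fun_prop), lintegral_prod_mul (f := fun y ↦ g y ^ p)
          (g := fun z ↦ g z ^ p) (by fun_prop) (by fun_prop)]
        gcongr
        simpa only [hsq] using hL2 (fun y ↦ g y ^ (p / 2)) (by fun_prop)
    _ = C ^ l * (∫⁻ y, g y ^ p ∂μ) ^ (2 - l) := by
        rw [ENNReal.mul_rpow_of_nonneg _ _ hl0, ENNReal.mul_rpow_of_nonneg _ _ hl1', mul_assoc,
          ← ENNReal.rpow_add_of_nonneg _ _ hl1' hl1',
          ← ENNReal.rpow_add_of_nonneg _ _ hl0 (by linarith)]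
        ring_nf

end SchurTest

section ProdPowerKernel

variable {ι : Type*} [Fintype ι]

theorem lintegral_pi_prod_eq {X : ι → Type*} [∀ i, MeasurableSpace (X i)]
    (μ : ∀ i, Measure (X i)) [∀ i, SigmaFinite (μ i)] {f : ∀ i, X i → ℝ≥0∞}
    (hf : ∀ i, Measurable (f i)) :
    ∫⁻ x, ∏ i, f i (x i) ∂Measure.pi μ = ∏ i, ∫⁻ t, f i t ∂μ i := by
  classical
  have hmarginal : ∀ s : Finset ι, ∫⋯∫⁻_s, (fun x ↦ ∏ i, f i (x i)) ∂μ =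
      fun x ↦ (∏ i ∈ s, ∫⁻ t, f i t ∂μ i) * ∏ i ∈ sᶜ, f i (x i) := fun s ↦ by
    induction s using Finset.induction_on with
    | empty => simp
    | insert i s hi ih =>
      ext x
      rw [lmarginal_insert _ (by fun_prop) hi, ih]
      have hcompl : sᶜ = insert i (insert i s)ᶜ := by
        rw [Finset.compl_insert, Finset.insert_erase (Finset.mem_compl.2 hi)]
      have hrest : ∀ t, ∏ j ∈ (insert i s)ᶜ, f j (Function.update x i t j) =
          ∏ j ∈ (insert i s)ᶜ, f j (x j) := fun t ↦
        Finset.prod_congr rfl fun j hj ↦ by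
          rw [Function.update_of_ne (by rintro rfl; simp at hj)]
      simp only [hcompl, Finset.prod_insert (a := i) (s := (insert i s)ᶜ) (by simp),
        Function.update_self, hrest]
      rw [lintegral_const_mul _ ((hf i).mul_const _), lintegral_mul_const _ (hf i),
        Finset.prod_insert hi]
      ring
  rcases isEmpty_or_nonempty (∀ i, X i) with hempty | ⟨⟨x⟩⟩
  · obtain ⟨i, hi⟩ := isEmpty_pi.1 hempty
    rw [lintegral_of_isEmpty, Finset.prod_eq_zero (Finset.mem_univ i) (lintegral_of_isEmpty _ _)]
  · simpa using congrFun (hmarginal Finset.univ) x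

/-- The tensor power of `powerKernel m` on Euclidean space. -/
noncomputable def prodPowerKernel (m : ℕ) (y z : EuclideanSpace ℝ ι) : ℝ≥0∞ :=
  ∏ j, powerKernel m (y j) (z j)

variable {m : ℕ}

theorem measurable_prodPowerKernel :
    Measurable (Function.uncurry (prodPowerKernel (ι := ι) m)) := by
  unfold prodPowerKernel powerKernel Function.uncurry
  fun_prop

theorem prodPowerKernel_comm (y z : EuclideanSpace ℝ ι) :
    prodPowerKernel m y z = prodPowerKernel m z y :=
  Finset.prod_congr rfl fun _ _ ↦ powerKernel_comm _ _

theorem ae_forall_apply_ne_zero : ∀ᵐ y : EuclideanSpace ℝ ι, ∀ i, y i ≠ 0 :=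
  (PiLp.volume_preserving_ofLp ι).quasiMeasurePreserving.ae
    (ae_all_iff.2 fun i ↦ Measure.ae_eval_ne (fun _ ↦ volume) i 0)

theorem lintegral_prodPowerKernel_mul_prod_rieszKernel (hm : m ≠ 0) {y : EuclideanSpace ℝ ι}
    (hy : ∀ i, y i ≠ 0) :
    ∫⁻ z, prodPowerKernel m y z * ∏ j, rieszKernel (1 / 2) (z j) =
      powerKernelConst m ^ Fintype.card ι * ∏ j, rieszKernel (1 / 2) (y j) := by
  simp only [prodPowerKernel, ← Finset.prod_mul_distrib]
  rw [(PiLp.volume_preserving_ofLp ι).lintegral_comp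
    (f := fun z ↦ ∏ j, powerKernel m (y j) (z j) * rieszKernel (1 / 2) (z j)) (by fun_prop),
    volume_pi, lintegral_pi_prod_eq (f := fun j t ↦ powerKernel m (y j) t * rieszKernel (1 / 2) t) _
      (fun j ↦ by fun_prop)]
  simp only [lintegral_powerKernel_mul_rieszKernel hm (hy _), Finset.prod_mul_distrib,
    Finset.prod_const, Finset.card_univ]

theorem lintegral_lintegral_mul_mul_prodPowerKernel_le (hm : m ≠ 0)
    {F : EuclideanSpace ℝ ι → ℝ≥0∞} (hF : AEMeasurable F) :
    ∫⁻ y, ∫⁻ z, F y * F z * prodPowerKernel m y z ≤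
      2 * powerKernelConst m ^ Fintype.card ι * ∫⁻ y, F y ^ 2 := by
  refine lintegral_lintegral_mul_mul_le_of_schur measurable_prodPowerKernel prodPowerKernel_comm
    (H := fun y ↦ ∏ j, rieszKernel (1 / 2) (y j)) (by fun_prop) ?_ ?_ ?_ hF
  · exact .of_forall fun y ↦ Finset.prod_ne_zero_iff.2 fun j _ ↦
      rieszKernel_ne_zero one_half_pos.le _
  · exact ae_forall_apply_ne_zero.mono fun y hy ↦
      ENNReal.prod_ne_top fun j _ ↦ rieszKernel_ne_top (hy j) _
  · exact ae_forall_apply_ne_zero.mono fun y hy ↦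
      (lintegral_prodPowerKernel_mul_prod_rieszKernel hm hy).le

end ProdPowerKernel

section TTStar

variable {ι : Type*} [Fintype ι]

/-- The kernel `∫ exp(i ∑ₖ xₖ ^ αₖ (yₖ ^ m - zₖ ^ m)) dσ(x)` of `T* T`, where `T` is the operator
`oscOp α m` followed by restriction to the unit sphere. -/
noncomputable def oscKernel (α : ι → ℕ) (m : ℕ) (y z : EuclideanSpace ℝ ι) : ℂ :=
  ∫ x, Complex.exp (Complex.I * powerPhase α (fun k ↦ y k ^ m - z k ^ m) x)
    ∂sphereMeasure (EuclideanSpace ℝ ι)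

variable {α : ι → ℕ} {δ l : ℝ} {m : ℕ}

theorem exists_enorm_integral_exp_powerPhase_le_rieszKernel (hι : 2 ≤ Fintype.card ι)
    (hα : ∀ k, 3 ≤ α k) (hδ0 : 0 ≤ δ) (hδ : ∀ k, δ * α k ≤ 1) :
    ∃ C ≠ ∞, ∀ (ξ : ι → ℝ) (i : ι),
      ‖∫ x, Complex.exp (Complex.I * powerPhase α ξ x) ∂sphereMeasure (EuclideanSpace ℝ ι)‖ₑ ≤
        C * rieszKernel δ (ξ i) := by
  choose C hC0 hC using exists_norm_integral_exp_powerPhase_le hι hα hδ0 hδ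
  set V := (sphereMeasure (EuclideanSpace ℝ ι)).real Set.univ
  refine ⟨ENNReal.ofReal (∑ i, C i + V + 1), ENNReal.ofReal_ne_top, fun ξ i ↦ ?_⟩
  have hsum : C i ≤ ∑ i, C i := Finset.single_le_sum (fun j _ ↦ hC0 j) (Finset.mem_univ i)
  have hV : 0 ≤ V := measureReal_nonneg
  rw [← ofReal_norm]
  by_cases hξ : ξ i = 0
  · rcases hδ0.eq_or_lt with rfl | hδpos
    · have htriv := norm_integral_le_of_norm_le_const (μ := sphereMeasure (EuclideanSpace ℝ ι))
        (.of_forall fun x ↦ (Complex.norm_exp_I_mul_ofReal (powerPhase α ξ x)).le)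
      rw [rieszKernel, neg_zero, ENNReal.rpow_zero, mul_one]
      exact ENNReal.ofReal_le_ofReal (by linarith [hC0 i])
    · rw [hξ, rieszKernel_zero_right hδpos, ENNReal.mul_top (by simp; linarith [hC0 i])]
      exact le_top
  · rw [rieszKernel_of_ne_zero hξ, ← ENNReal.ofReal_mul (by linarith [hC0 i])]
    refine ENNReal.ofReal_le_ofReal ((hC i ξ hξ).trans ?_)
    gcongr
    linarith

theorem le_mul_prod_rpow_inv_card [Nonempty ι] {a C : ℝ≥0∞} {b : ι → ℝ≥0∞}
    (h : ∀ i, a ≤ C * b i) : a ≤ C * (∏ i, b i) ^ (Fintype.card ι : ℝ)⁻¹ := by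
  have hcard : (0 : ℝ) < Fintype.card ι := by exact_mod_cast Fintype.card_pos
  have hprod : a ^ (Fintype.card ι : ℝ) ≤ C ^ (Fintype.card ι : ℝ) * ∏ i, b i := by
    simpa [Finset.prod_mul_distrib] using Finset.prod_le_prod' fun i (_ : i ∈ Finset.univ) ↦ h i
  calc a ≤ (C ^ (Fintype.card ι : ℝ) * ∏ i, b i) ^ (Fintype.card ι : ℝ)⁻¹ :=
        (ENNReal.le_rpow_inv_iff hcard).2 hprod
    _ = C * (∏ i, b i) ^ (Fintype.card ι : ℝ)⁻¹ := by
        rw [ENNReal.mul_rpow_of_nonneg _ _ (by positivity), ENNReal.rpow_rpow_inv hcard.ne']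

/- The decay in a single direction `ξ i` is available for every `i`; the geometric mean over `i`
distributes it evenly over all coordinates. -/
theorem exists_enorm_oscKernel_le (hι : 2 ≤ Fintype.card ι) (hα : ∀ k, 3 ≤ α k) (hm : m ≠ 0)
    (hl : 0 ≤ l) (hlα : ∀ k, Fintype.card ι * l * α k ≤ m) :
    ∃ C ≠ ∞, ∀ y z : EuclideanSpace ℝ ι, ‖oscKernel α m y z‖ₑ ≤ C * prodPowerKernel m y z ^ l := by
  have hne : Nonempty ι := Fintype.card_pos_iff.1 (by omega)
  have hcard : (Fintype.card ι : ℝ) ≠ 0 := by exact_mod_cast Fintype.card_ne_zero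
  have hm0 : (0 : ℝ) < m := by positivity
  obtain ⟨C, hCtop, hC⟩ := exists_enorm_integral_exp_powerPhase_le_rieszKernel
    (δ := 1 / m * (Fintype.card ι * l)) hι hα (by positivity) fun k ↦ by
      rw [one_div_mul_eq_div, div_mul_eq_mul_div, div_le_one hm0]
      exact hlα k
  refine ⟨C, hCtop, fun y z ↦ (le_mul_prod_rpow_inv_card (hC _)).trans_eq ?_⟩
  simp only [rieszKernel_mul_left]
  rw [ENNReal.prod_rpow_of_nonneg (by positivity), ← ENNReal.rpow_mul, mul_comm _ l,
    mul_inv_cancel_right₀ hcard, prodPowerKernel]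
  rfl

variable {n : ℕ} {β : Fin n → ℕ} {f : EuclideanSpace ℝ (Fin n) → ℂ}

theorem ofReal_norm_oscOp_sq (x : EuclideanSpace ℝ (Fin n)) :
    ((‖oscOp β m f x‖ ^ 2 : ℝ) : ℂ) =
      ∫ q : EuclideanSpace ℝ (Fin n) × EuclideanSpace ℝ (Fin n),
        f q.1 * starRingEnd ℂ (f q.2) *
          Complex.exp (Complex.I * powerPhase β (fun k ↦ q.1 k ^ m - q.2 k ^ m) x) := by
  rw [Complex.ofReal_pow, ← Complex.mul_conj', oscOp, ← integral_conj, ← integral_prod_mul,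
    ← Measure.volume_eq_prod]
  congr 1 with q
  have hphase : powerPhase β (fun k ↦ q.1 k ^ m - q.2 k ^ m) x =
      ∑ j, x j ^ β j * q.1 j ^ m - ∑ j, x j ^ β j * q.2 j ^ m := by
    rw [powerPhase, ← Finset.sum_sub_distrib]
    exact Finset.sum_congr rfl fun k _ ↦ by ring
  rw [hphase, map_mul, ← Complex.exp_conj, map_mul, Complex.conj_I, Complex.conj_ofReal,
    Complex.ofReal_sub, mul_sub, sub_eq_add_neg, ← neg_mul, Complex.exp_add]
  ring

theorem integral_ofReal_norm_oscOp_sq (hf : Integrable f) :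
    ∫ x, ((‖oscOp β m f x‖ ^ 2 : ℝ) : ℂ) ∂sphereMeasure (EuclideanSpace ℝ (Fin n)) =
      ∫ q : EuclideanSpace ℝ (Fin n) × EuclideanSpace ℝ (Fin n),
        f q.1 * starRingEnd ℂ (f q.2) * oscKernel β m q.1 q.2 := by
  have htensor : Integrable fun q : EuclideanSpace ℝ (Fin n) × EuclideanSpace ℝ (Fin n) ↦
      f q.1 * starRingEnd ℂ (f q.2) :=
    hf.mul_prod (Complex.conjLIE.toContinuousLinearEquiv.integrable_comp_iff.2 hf)
  have hcont : Continuous fun r : EuclideanSpace ℝ (Fin n) ×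
      EuclideanSpace ℝ (Fin n) × EuclideanSpace ℝ (Fin n) ↦
      Complex.exp (Complex.I * powerPhase β (fun k ↦ r.2.1 k ^ m - r.2.2 k ^ m) r.1) := by
    unfold powerPhase
    fun_prop
  have hjoint : Integrable (Function.uncurry fun (x : EuclideanSpace ℝ (Fin n))
      (q : EuclideanSpace ℝ (Fin n) × EuclideanSpace ℝ (Fin n)) ↦
        f q.1 * starRingEnd ℂ (f q.2) *
          Complex.exp (Complex.I * powerPhase β (fun k ↦ q.1 k ^ m - q.2 k ^ m) x))
      ((sphereMeasure (EuclideanSpace ℝ (Fin n))).prod volume) :=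
    (htensor.comp_snd _).mul_bdd (c := 1) hcont.aestronglyMeasurable
      (.of_forall fun r ↦ (Complex.norm_exp_I_mul_ofReal _).le)
  simp only [ofReal_norm_oscOp_sq]
  rw [integral_integral_swap hjoint]
  simp only [integral_const_mul, oscKernel]

theorem ofReal_integral_norm_oscOp_sq_le (hf : Integrable f) :
    ENNReal.ofReal (∫ x, ‖oscOp β m f x‖ ^ 2 ∂sphereMeasure (EuclideanSpace ℝ (Fin n))) ≤
      ∫⁻ y, ∫⁻ z, ‖f y‖ₑ * ‖f z‖ₑ * ‖oscKernel β m y z‖ₑ := by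
  have hnonneg : 0 ≤ ∫ x, ‖oscOp β m f x‖ ^ 2 ∂sphereMeasure (EuclideanSpace ℝ (Fin n)) :=
    integral_nonneg fun x ↦ by positivity
  rw [← Real.norm_of_nonneg hnonneg, ← Complex.norm_real, ofReal_norm, ← integral_complex_ofReal,
    integral_ofReal_norm_oscOp_sq hf]
  refine (enorm_integral_le_lintegral_enorm _).trans ((lintegral_prod_le _).trans_eq ?_)
  simp only [enorm_mul, RCLike.enorm_conj]

end TTStar

section Restriction

variable {n m : ℕ} {α : Fin n → ℕ} {p l : ℝ}

theorem eLpNorm_sq_eq_lintegral_rpow {X : Type*} [MeasurableSpace X] {μ : Measure X}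
    (hp : 0 < p) (hpl : p * (1 - l / 2) = 1) (f : X → ℂ) :
    eLpNorm f (ENNReal.ofReal p) μ ^ 2 = (∫⁻ y, ‖f y‖ₑ ^ p ∂μ) ^ (2 - l) := by
  rw [eLpNorm_eq_lintegral_rpow_enorm_toReal (by simpa using hp) (by simp),
    ENNReal.toReal_ofReal hp.le, ← ENNReal.rpow_natCast, ← ENNReal.rpow_mul]
  congr 1
  field_simp
  push_cast
  linarith

theorem exists_ofReal_integral_norm_oscOp_sq_le (hn : 2 ≤ n) (hα : ∀ j, 3 ≤ α j) (hm : 2 ≤ m)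
    (hl0 : 0 ≤ l) (hl1 : l ≤ 1) (hpl : p * (1 - l / 2) = 1) (hlα : ∀ j, n * l * α j ≤ m) :
    ∃ D ≠ ∞, ∀ f : EuclideanSpace ℝ (Fin n) → ℂ, Integrable f →
      ENNReal.ofReal (∫ x, ‖oscOp α m f x‖ ^ 2 ∂sphereMeasure (EuclideanSpace ℝ (Fin n))) ≤
        D * eLpNorm f (ENNReal.ofReal p) volume ^ 2 := by
  obtain ⟨C, hCtop, hC⟩ := exists_enorm_oscKernel_le (m := m) (by simpa using hn) hα
    (by omega) hl0 (by simpa using hlα)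
  set B : ℝ≥0∞ := 2 * powerKernelConst m ^ Fintype.card (Fin n)
  have hBtop : B ≠ ∞ :=
    ENNReal.mul_ne_top ENNReal.ofNat_ne_top (ENNReal.pow_ne_top (powerKernelConst_lt_top hm).ne)
  refine ⟨C * B ^ l, ENNReal.mul_ne_top hCtop (ENNReal.rpow_ne_top_of_nonneg hl0 hBtop),
    fun f hf ↦ ?_⟩
  calc ENNReal.ofReal (∫ x, ‖oscOp α m f x‖ ^ 2 ∂sphereMeasure (EuclideanSpace ℝ (Fin n)))
      ≤ ∫⁻ y, ∫⁻ z, ‖f y‖ₑ * ‖f z‖ₑ * ‖oscKernel α m y z‖ₑ := ofReal_integral_norm_oscOp_sq_le hf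
    _ ≤ ∫⁻ y, ∫⁻ z, C * (‖f y‖ₑ * ‖f z‖ₑ * prodPowerKernel m y z ^ l) := by
        refine lintegral_mono fun y ↦ lintegral_mono fun z ↦ ?_
        rw [mul_left_comm]
        gcongr
        exact hC y z
    _ = C * ∫⁻ y, ∫⁻ z, ‖f y‖ₑ * ‖f z‖ₑ * prodPowerKernel m y z ^ l := by
        simp only [lintegral_const_mul' _ _ hCtop]
    _ ≤ C * (B ^ l * (∫⁻ y, ‖f y‖ₑ ^ p) ^ (2 - l)) := by
        gcongr
        exact lintegral_lintegral_mul_mul_rpow_le measurable_prodPowerKernel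
          (fun F hF ↦ lintegral_lintegral_mul_mul_prodPowerKernel_le (by omega) hF) hl0 hl1 hpl
          hf.aestronglyMeasurable.enorm
    _ = C * B ^ l * eLpNorm f (ENNReal.ofReal p) volume ^ 2 := by
        rw [eLpNorm_sq_eq_lintegral_rpow (by nlinarith) hpl, mul_assoc]

theorem restriction_theorem_general (hn : 2 ≤ n) (hα : ∀ j, 3 ≤ α j) (hm : 2 ≤ m) (hp1 : 1 ≤ p)
    (hp2 : p ≤ 2) (hpm : ∀ j, 2 * n * α j * (p - 1) ≤ m * p) :
    ∃ A : ℝ, 0 < A ∧ ∀ f : EuclideanSpace ℝ (Fin n) → ℂ, Integrable f →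
      MemLp f (ENNReal.ofReal p) volume →
      (∫ x in Metric.sphere (0 : EuclideanSpace ℝ (Fin n)) 1,
          ‖oscOp α m f x‖ ^ 2 ∂(μH[(n : ℝ) - 1])) ^ ((1 : ℝ) / 2)
        ≤ A * (eLpNorm f (ENNReal.ofReal p) volume).toReal := by
  have hp0 : 0 < p := by linarith
  obtain ⟨D, hDtop, hD⟩ := exists_ofReal_integral_norm_oscOp_sq_le (l := 2 * (p - 1) / p) (p := p)
    hn hα hm (div_nonneg (by linarith) hp0.le) (by rw [div_le_one hp0]; linarith)
    (by field_simp; ring) (fun j ↦ by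
      rw [mul_div_assoc', div_mul_eq_mul_div, div_le_iff₀ hp0]
      linarith [hpm j])
  refine ⟨√(D.toReal + 1), by positivity, fun f hf hfp ↦ ?_⟩
  have hσ : sphereMeasure (EuclideanSpace ℝ (Fin n)) =
      μH[(n : ℝ) - 1].restrict (Metric.sphere 0 1) := by
    rw [sphereMeasure, finrank_euclideanSpace_fin]
  have hsq := (ENNReal.ofReal_le_iff_le_toReal
    (ENNReal.mul_ne_top hDtop (ENNReal.pow_ne_top hfp.eLpNorm_ne_top))).1 (hD f hf)
  rw [hσ, ENNReal.toReal_mul, ENNReal.toReal_pow] at hsq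
  rw [← Real.sqrt_eq_rpow]
  refine Real.sqrt_le_iff.2 ⟨by positivity, hsq.trans ?_⟩
  rw [mul_pow, Real.sq_sqrt (by positivity)]
  gcongr
  linarith

theorem le_two_and_two_mul_mul_sub_one_le_of_le_div {a b p : ℝ} (hba : b ≤ a)
    (hab : 0 < 2 * a - b) (hp : p ≤ 2 * a / (2 * a - b)) : p ≤ 2 ∧ 2 * a * (p - 1) ≤ b * p :=
  ⟨hp.trans (by rw [div_le_iff₀ hab]; linarith), by linarith [(le_div_iff₀ hab).1 hp]⟩

end Restriction

/-- Restriction theorem for `T_{α,m}` on the sphere. -/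
theorem restriction_theorem (n : ℕ) (hn : 2 ≤ n) (α : Fin n → ℕ) (hα : ∀ j, 3 ≤ α j)
    (αmax : ℕ) (hαmax : αmax = Finset.univ.sup α)
    (m : ℕ) (hm1 : n < m) (hm2 : m ≤ n * αmax)
    (p : ℝ) (hp1 : 1 ≤ p) (hp2 : p ≤ (2 * n * αmax : ℝ) / (2 * n * αmax - m)) :
    ∃ A : ℝ, 0 < A ∧ ∀ f : SchwartzMap (EuclideanSpace ℝ (Fin n)) ℂ,
      (∫ x in Metric.sphere (0 : EuclideanSpace ℝ (Fin n)) 1,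
          ‖oscOp α m (⇑f) x‖ ^ 2 ∂(μH[(n : ℝ) - 1])) ^ ((1 : ℝ) / 2)
        ≤ A * (eLpNorm (⇑f) (ENNReal.ofReal p) volume).toReal := by
  have hm0 : (0 : ℝ) < m := by exact_mod_cast hn.trans_lt hm1 |>.pos
  have hmN : (m : ℝ) ≤ n * αmax := by exact_mod_cast hm2
  obtain ⟨hp2', hpm⟩ := le_two_and_two_mul_mul_sub_one_le_of_le_div (a := n * αmax) hmN
    (by linarith) (by simpa only [mul_assoc] using hp2)
  have hαle (j : Fin n) : (α j : ℝ) ≤ αmax := by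
    exact_mod_cast hαmax ▸ Finset.le_sup (Finset.mem_univ j)
  have hp1' := sub_nonneg.2 hp1
  obtain ⟨A, hA, hbound⟩ := restriction_theorem_general (m := m) hn hα (by omega) hp1 hp2'
    fun j ↦ by
      grw [hαle j, mul_assoc 2, hpm]
  exact ⟨A, hA, fun f ↦ hbound f f.integrable (f.memLp _ _)⟩
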